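/- arXiv:2105.00919 — 5 statements merged into one kernel-verified Lean document; each statement's English description precedes it below -/
import Mathlib

section
/- Let n, i be nonnegative integers with n² − 5i² = 4 (so n and i have the same parity). Set O = (0,0), M = ((n+5i)/2)·(2,1), A = M + (2,−4), B = n·(2,1), C = M − (2,−4). Then A, B, C have integer coordinates, OABC is a kite with axis of symmetry OB (C is the reflection of A in the line OB, |OA| = |OC| and |AB| = |BC|), and OABC is equable: its area equals its perimeter. (This is family K1 of lattice equable kites.) -/
noncomputable section

/-- Euclidean distance between two points of `ℝ × ℝ`. -/
def dist2 (p q : ℝ × ℝ) : ℝ := Real.sqrt ((p.1 - q.1) ^ 2 + (p.2 - q.2) ^ 2)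

/-- Signed cross product of the vectors `q - p` and `r - p`. -/
def cross (p q r : ℝ × ℝ) : ℝ :=
  (q.1 - p.1) * (r.2 - p.2) - (q.2 - p.2) * (r.1 - p.1)

/-- Three points are collinear. -/
def Collinear3 (p q r : ℝ × ℝ) : Prop := cross p q r = 0

/-- Dot product on `ℝ × ℝ`. -/
def dot2 (p q : ℝ × ℝ) : ℝ := p.1 * q.1 + p.2 * q.2

/-- Closed segment between two points. -/
def Seg (p q : ℝ × ℝ) : Set (ℝ × ℝ) :=
  {x | ∃ t : ℝ, 0 ≤ t ∧ t ≤ 1 ∧ x = (1 - t) • p + t • q}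

/-- Twice the signed (shoelace) area of the quadrilateral `O A B C`. -/
def shoelace (O A B C : ℝ × ℝ) : ℝ :=
  (O.1 * A.2 - A.1 * O.2) + (A.1 * B.2 - B.1 * A.2) +
    (B.1 * C.2 - C.1 * B.2) + (C.1 * O.2 - O.1 * C.2)

/-- Area of the (simple) quadrilateral `O A B C`, by the shoelace formula. -/
def quadArea (O A B C : ℝ × ℝ) : ℝ := |shoelace O A B C| / 2

/-- Perimeter of the quadrilateral `O A B C`. -/
def quadPerim (O A B C : ℝ × ℝ) : ℝ :=
  dist2 O A + dist2 A B + dist2 B C + dist2 C O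

/-- Simple quadrilateral: no three vertices collinear, and the four closed sides
intersect only at shared endpoints. -/
def IsSimpleQuad (O A B C : ℝ × ℝ) : Prop :=
  ¬ Collinear3 O A B ∧ ¬ Collinear3 A B C ∧ ¬ Collinear3 B C O ∧ ¬ Collinear3 C O A ∧
  Seg O A ∩ Seg B C = ∅ ∧ Seg A B ∩ Seg C O = ∅ ∧
  Seg O A ∩ Seg A B = {A} ∧ Seg A B ∩ Seg B C = {B} ∧
  Seg B C ∩ Seg C O = {C} ∧ Seg C O ∩ Seg O A = {O}

/-- Quadrilateral `O A B C`: simple, with vertices in counterclockwise order. -/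
def IsQuad (O A B C : ℝ × ℝ) : Prop :=
  IsSimpleQuad O A B C ∧ 0 < shoelace O A B C

/-- A point of `ℝ × ℝ` with integer coordinates. -/
def IsLatticePt (p : ℝ × ℝ) : Prop := ∃ m n : ℤ, p = ((m : ℝ), (n : ℝ))

/-- An isometry of the Euclidean plane `ℝ × ℝ`. -/
def IsIsometry2 (f : ℝ × ℝ → ℝ × ℝ) : Prop :=
  Function.Bijective f ∧ ∀ p q, dist2 (f p) (f q) = dist2 p q

/-- The four vertices are in convex position: no vertex lies in the convex hull
of the other three. -/
def ConvexPos (O A B C : ℝ × ℝ) : Prop :=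
  O ∉ convexHull ℝ ({A, B, C} : Set (ℝ × ℝ)) ∧
  A ∉ convexHull ℝ ({O, B, C} : Set (ℝ × ℝ)) ∧
  B ∉ convexHull ℝ ({O, A, C} : Set (ℝ × ℝ)) ∧
  C ∉ convexHull ℝ ({O, A, B} : Set (ℝ × ℝ))

/-- The segment `pq` is parallel to the segment `rs`. -/
def Para (p q r s : ℝ × ℝ) : Prop :=
  (q.1 - p.1) * (s.2 - r.2) - (q.2 - p.2) * (s.1 - r.1) = 0

/-- Area of the triangle `p q r`. -/
def triArea (p q r : ℝ × ℝ) : ℝ := |cross p q r| / 2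

/-- Heron's formula: area of a triangle with side lengths `p`, `q`, `r`. -/
def heronArea (p q r : ℝ) : ℝ :=
  Real.sqrt ((p + q + r) * (-p + q + r) * (p - q + r) * (p + q - r)) / 4

end

theorem seg_corner (P Q R : ℝ × ℝ) (h : cross P Q R ≠ 0) : Seg P Q ∩ Seg Q R = {Q} := by
  obtain ⟨p1, p2⟩ := P
  obtain ⟨q1, q2⟩ := Q
  obtain ⟨r1, r2⟩ := R
  ext ⟨x, y⟩
  simp only [Seg, Set.mem_inter_iff, Set.mem_ofPred_eq, Set.mem_singleton_iff, Prod.smul_mk,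
    Prod.mk_add_mk, Prod.mk.injEq, smul_eq_mul]
  simp only [cross] at h
  constructor
  · rintro ⟨⟨t, _, _, hx, hy⟩, ⟨r, _, _, hx', hy'⟩⟩
    have h0 : r * ((q1 - p1) * (r2 - p2) - (q2 - p2) * (r1 - p1)) = 0 := by
      linear_combination (q1 - p1) * (hy - hy') - (q2 - p2) * (hx - hx')
    have hr : r = 0 := by
      rcases mul_eq_zero.mp h0 with h1 | h1
      · exact h1
      · exact absurd h1 h
    subst hr
    constructor <;> linarith
  · rintro ⟨rfl, rfl⟩
    exact ⟨⟨1, by norm_num, by norm_num, by ring, by ring⟩,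
      ⟨0, by norm_num, by norm_num, by ring, by ring⟩⟩

theorem seg_disjoint (P Q R S : ℝ × ℝ) (h : cross P R Q * cross P R S < 0) :
    Seg P Q ∩ Seg R S = ∅ := by
  obtain ⟨p1, p2⟩ := P
  obtain ⟨q1, q2⟩ := Q
  obtain ⟨r1, r2⟩ := R
  obtain ⟨s1, s2⟩ := S
  rw [Set.eq_empty_iff_forall_notMem]
  rintro ⟨x, y⟩
  simp only [Seg, Set.mem_inter_iff, Set.mem_ofPred_eq, Prod.smul_mk,
    Prod.mk_add_mk, Prod.mk.injEq, smul_eq_mul]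
  simp only [cross] at h
  rintro ⟨⟨t, ht, _, hx, hy⟩, ⟨r, hr, _, hx', hy'⟩⟩
  set a := (r1 - p1) * (q2 - p2) - (r2 - p2) * (q1 - p1) with ha
  set b := (r1 - p1) * (s2 - p2) - (r2 - p2) * (s1 - p1) with hb
  have h0 : t * a = r * b := by
    rw [ha, hb]
    linear_combination (r1 - p1) * (hy' - hy) - (r2 - p2) * (hx' - hx)
  have hane : a ≠ 0 := by rintro h1; rw [h1] at h; simp at h
  have hbne : b ≠ 0 := by rintro h1; rw [h1] at h; simp at h
  have h1 : t * a ^ 2 = 0 := by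
    have e1 : t * a ^ 2 = r * (a * b) := by linear_combination a * h0
    have e2 : 0 ≤ t * a ^ 2 := by positivity
    have e3 : r * (a * b) ≤ 0 := mul_nonpos_of_nonneg_of_nonpos hr h.le
    linarith
  have ht0 : t = 0 := by simpa [hane] using h1
  have hr0 : r = 0 := by
    rw [ht0] at h0
    simpa [hbne] using h0.symm
  subst ht0 hr0
  have e1 : r1 = p1 := by linarith
  have e2 : r2 = p2 := by linarith
  apply hane
  rw [ha, e1, e2]; ring

theorem seg_symm (P Q : ℝ × ℝ) : Seg P Q = Seg Q P := by
  ext x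
  constructor <;> rintro ⟨t, h0, h1, rfl⟩ <;>
    exact ⟨1 - t, by linarith, by linarith, by rw [sub_sub_cancel, add_comm]⟩

/-- Family K1 of lattice equable kites. -/
theorem K1_lattice_equable_kite (n i : ℤ) (hn : 0 ≤ n) (hi : 0 ≤ i)
    (hpell : n ^ 2 - 5 * i ^ 2 = 4) :
    ∀ O M A B C : ℝ × ℝ,
      O = ((0 : ℝ), (0 : ℝ)) →
      M = (((n : ℝ) + 5 * (i : ℝ)) / 2) • ((2 : ℝ), (1 : ℝ)) →
      A = M + ((2 : ℝ), (-4 : ℝ)) →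
      B = (n : ℝ) • ((2 : ℝ), (1 : ℝ)) →
      C = M - ((2 : ℝ), (-4 : ℝ)) →
      IsLatticePt A ∧ IsLatticePt B ∧ IsLatticePt C ∧
      IsQuad O A B C ∧
      Collinear3 O B ((1 / 2 : ℝ) • (A + C)) ∧ dot2 (C - A) (B - O) = 0 ∧
      dist2 O A = dist2 O C ∧ dist2 A B = dist2 B C ∧
      quadArea O A B C = quadPerim O A B C := by
  intro O M A B C hO hM hA hB hC
  have hR : (n : ℝ) ^ 2 - 5 * (i : ℝ) ^ 2 = 4 := by exact_mod_cast hpell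
  have hn' : (0 : ℝ) ≤ n := by exact_mod_cast hn
  have hi' : (0 : ℝ) ≤ i := by exact_mod_cast hi
  have hpos : (0 : ℝ) < n := by
    rcases hn'.lt_or_eq with h | h
    · exact h
    · rw [← h] at hR; nlinarith [sq_nonneg (i : ℝ)]
  have hin : (i : ℝ) ≤ n := by nlinarith
  have hne : (n : ℝ) - 5 * i ≠ 0 := by
    intro h
    have h1 : n = 5 * i := by
      have : (n : ℝ) = 5 * i := by linarith
      exact_mod_cast this
    subst h1
    have h2 : 5 * (i * i) = 1 := by nlinarith
    omega
  obtain ⟨k, hk⟩ : ∃ k, n + 5 * i = 2 * k := by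
    have h1 : Even (n ^ 2 - 5 * i ^ 2) := by rw [hpell]; decide
    have h2 : Even (n + 5 * i) := by
      revert h1
      simp [parity_simps]
    obtain ⟨k, hk⟩ := h2
    exact ⟨k, by omega⟩
  have hkR : (n : ℝ) + 5 * i = 2 * k := by exact_mod_cast hk
  have hA' : A = ((n : ℝ) + 5 * i + 2, ((n : ℝ) + 5 * i) / 2 - 4) := by
    rw [hA, hM]; ext <;> simp <;> ring
  have hB' : B = (2 * (n : ℝ), (n : ℝ)) := by
    rw [hB]; ext <;> simp <;> ring
  have hC' : C = ((n : ℝ) + 5 * i - 2, ((n : ℝ) + 5 * i) / 2 + 4) := by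
    rw [hC, hM]; ext <;> simp <;> ring
  clear hA hB hC hM
  subst hO hA' hB' hC'
  have dOA : dist2 (0, 0) ((n : ℝ) + 5 * i + 2, ((n : ℝ) + 5 * i) / 2 - 4) = 5 / 2 * (n + i) := by
    unfold dist2
    rw [Real.sqrt_eq_iff_mul_self_eq (by positivity) (by positivity)]
    dsimp only; linear_combination (-5) * hR
  have dOC : dist2 (0, 0) ((n : ℝ) + 5 * i - 2, ((n : ℝ) + 5 * i) / 2 + 4) = 5 / 2 * (n + i) := by
    unfold dist2
    rw [Real.sqrt_eq_iff_mul_self_eq (by positivity) (by positivity)]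
    dsimp only; linear_combination (-5) * hR
  have dCO : dist2 ((n : ℝ) + 5 * i - 2, ((n : ℝ) + 5 * i) / 2 + 4) (0, 0) = 5 / 2 * (n + i) := by
    unfold dist2
    rw [Real.sqrt_eq_iff_mul_self_eq (by positivity) (by positivity)]
    dsimp only; linear_combination (-5) * hR
  have dAB : dist2 ((n : ℝ) + 5 * i + 2, ((n : ℝ) + 5 * i) / 2 - 4) (2 * (n : ℝ), (n : ℝ))
      = 5 / 2 * (n - i) := by
    unfold dist2
    rw [Real.sqrt_eq_iff_mul_self_eq (by positivity) (by linarith)]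
    dsimp only; linear_combination (-5) * hR
  have dBC : dist2 (2 * (n : ℝ), (n : ℝ)) ((n : ℝ) + 5 * i - 2, ((n : ℝ) + 5 * i) / 2 + 4)
      = 5 / 2 * (n - i) := by
    unfold dist2
    rw [Real.sqrt_eq_iff_mul_self_eq (by positivity) (by linarith)]
    dsimp only; linear_combination (-5) * hR
  have hsh : shoelace (0, 0) ((n : ℝ) + 5 * i + 2, ((n : ℝ) + 5 * i) / 2 - 4) (2 * (n : ℝ), (n : ℝ))
      ((n : ℝ) + 5 * i - 2, ((n : ℝ) + 5 * i) / 2 + 4) = 20 * n := by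
    simp only [shoelace]; ring
  have c1 : cross (0, 0) ((n : ℝ) + 5 * i + 2, ((n : ℝ) + 5 * i) / 2 - 4) (2 * (n : ℝ), (n : ℝ)) ≠ 0 := by
    have : cross (0, 0) ((n : ℝ) + 5 * i + 2, ((n : ℝ) + 5 * i) / 2 - 4) (2 * (n : ℝ), (n : ℝ))
      = 10 * n := by simp only [cross]; ring
    rw [this]; positivity
  have c2 : cross ((n : ℝ) + 5 * i + 2, ((n : ℝ) + 5 * i) / 2 - 4) (2 * (n : ℝ), (n : ℝ))
      ((n : ℝ) + 5 * i - 2, ((n : ℝ) + 5 * i) / 2 + 4) ≠ 0 := by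
    have : cross ((n : ℝ) + 5 * i + 2, ((n : ℝ) + 5 * i) / 2 - 4) (2 * (n : ℝ), (n : ℝ))
      ((n : ℝ) + 5 * i - 2, ((n : ℝ) + 5 * i) / 2 + 4) = 10 * (n - 5 * i) := by simp only [cross]; ring
    rw [this]; exact mul_ne_zero (by norm_num) hne
  have c3 : cross (2 * (n : ℝ), (n : ℝ)) ((n : ℝ) + 5 * i - 2, ((n : ℝ) + 5 * i) / 2 + 4) (0, 0) ≠ 0 := by
    have : cross (2 * (n : ℝ), (n : ℝ)) ((n : ℝ) + 5 * i - 2, ((n : ℝ) + 5 * i) / 2 + 4) (0, 0)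
      = 10 * n := by simp only [cross]; ring
    rw [this]; positivity
  have c4 : cross ((n : ℝ) + 5 * i - 2, ((n : ℝ) + 5 * i) / 2 + 4) (0, 0)
      ((n : ℝ) + 5 * i + 2, ((n : ℝ) + 5 * i) / 2 - 4) ≠ 0 := by
    have : cross ((n : ℝ) + 5 * i - 2, ((n : ℝ) + 5 * i) / 2 + 4) (0, 0)
      ((n : ℝ) + 5 * i + 2, ((n : ℝ) + 5 * i) / 2 - 4) = 10 * (n + 5 * i) := by simp only [cross]; ring
    rw [this]; positivity
  have hnn : (0 : ℝ) < n * n := by positivity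
  refine ⟨⟨2 * k + 2, k - 4, ?_⟩, ⟨2 * n, n, ?_⟩, ⟨2 * k - 2, k + 4, ?_⟩,
    ⟨⟨c1, c2, c3, c4, ?_, ?_, seg_corner _ _ _ c1, seg_corner _ _ _ c2, seg_corner _ _ _ c3,
      seg_corner _ _ _ c4⟩, ?_⟩, ?_, ?_, ?_, ?_, ?_⟩
  · rw [hkR]; push_cast; ext <;> dsimp only; ring
  · push_cast; rfl
  · rw [hkR]; push_cast; ext <;> dsimp only; ring
  · apply seg_disjoint
    simp only [cross]
    nlinarith
  · rw [Set.inter_comm]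
    have h := seg_disjoint (2 * (n : ℝ), (n : ℝ)) ((n : ℝ) + 5 * i + 2, ((n : ℝ) + 5 * i) / 2 - 4) (0, 0)
      ((n : ℝ) + 5 * i - 2, ((n : ℝ) + 5 * i) / 2 + 4) (by simp only [cross]; nlinarith)
    rw [← seg_symm (2 * (n : ℝ), (n : ℝ)), ← seg_symm (0, 0), Set.inter_comm]
    exact h
  · rw [hsh]; positivity
  · simp [Collinear3, cross]; ring
  · simp [dot2]; ring
  · rw [dOA, dOC]
  · rw [dAB, dBC]
  · unfold quadArea quadPerim
    rw [hsh, dOA, dAB, dBC, dCO, abs_of_pos (by positivity)]; ring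
end

section
/- Up to isometries of ℝ², there are exactly three convex lattice equable kites: every convex lattice equable kite can be mapped by an isometry of ℝ² onto one of (a) the rhombus with vertices (0,0), (4,−3), (4,2), (0,5) (side length 5); (b) the square with vertices (0,0), (4,0), (4,4), (0,4); (c) the kite with vertices (0,0), (12,9), (12,12), (9,12) (side lengths 3 and 15). -/
/-- Bounded search over `(m, N, g, w)`. -/
def kiteCheck : Bool :=
  (List.range 24).all fun m => (List.range (536 / (m * m) + 1)).all fun N =>
    !(Nat.ble 17 (m * m * N)) ||
    (List.range 68).all fun g =>
      !(Nat.blt (g * g * N * ((m * m * N - 16) * (m * m * N - 16)))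
          (16 * ((m * m * N) * (m * m * N)))) ||
      (List.range g).all fun w =>
        !(Nat.beq (16 * (m * m * N - 16) * (w * w) + m * m * N * (16 * (m * m)))
          (m * m * N * (g * g * (m * m * N - 16)))) ||
        [(1,17,4,0), (1,18,4,3), (1,20,2,0), (1,32,1,0), (2,5,4,0), (2,5,6,5),
          (2,8,2,0), (2,20,1,0), (3,2,12,9), (4,2,4,0), (4,5,2,0), (4,17,1,0)].contains (m, N, g, w)

theorem kiteCheck_true : kiteCheck = true := by
  decide +kernel

theorem kite_enum : ∀ m < 24, ∀ N < 536 / (m * m) + 1, 17 ≤ m * m * N →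
    ∀ g < 68, g * g * N * ((m * m * N - 16) * (m * m * N - 16)) < 16 * ((m * m * N) * (m * m * N)) →
    ∀ w < g, 16 * (m * m * N - 16) * (w * w) + m * m * N * (16 * (m * m)) =
        m * m * N * (g * g * (m * m * N - 16)) →
      (m, N, g, w) ∈ [(1,17,4,0), (1,18,4,3), (1,20,2,0), (1,32,1,0), (2,5,4,0), (2,5,6,5),
        (2,8,2,0), (2,20,1,0), (3,2,12,9), (4,2,4,0), (4,5,2,0), (4,17,1,0)] := by
  intro m hm N hN h17 g hg hlt w hw heq
  have h := kiteCheck_true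
  unfold kiteCheck at h
  have h := List.all_eq_true.1 h m (List.mem_range.2 hm)
  have h := List.all_eq_true.1 h N (List.mem_range.2 hN)
  rw [Nat.ble_eq_true_of_le h17, Bool.not_true, Bool.false_or] at h
  have h := List.all_eq_true.1 h g (List.mem_range.2 hg)
  rw [show Nat.blt _ _ = true from Nat.ble_eq_true_of_le hlt, Bool.not_true, Bool.false_or] at h
  have h := List.all_eq_true.1 h w (List.mem_range.2 hw)
  rw [heq, Nat.beq_refl, Bool.not_true, Bool.false_or] at h
  exact List.contains_iff_mem.1 h

theorem kite_arith (g m N w : ℤ) (hg : 0 < g) (hm : 0 < m) (hN : 0 < N)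
    (hw1 : -g < w) (hw2 : w < g)
    (h1 : 16 * w < g * (m ^ 2 * N)) (h2 : -(16 * w) < g * (m ^ 2 * N))
    (heq : 16 * (m ^ 2 * N - 16) * w ^ 2 = m ^ 2 * N * (g ^ 2 * (m ^ 2 * N - 16) - 16 * m ^ 2)) :
    (m.natAbs, N.natAbs, g.natAbs, w.natAbs) ∈
      [(1,17,4,0), (1,18,4,3), (1,20,2,0), (1,32,1,0), (2,5,4,0), (2,5,6,5),
        (2,8,2,0), (2,20,1,0), (3,2,12,9), (4,2,4,0), (4,5,2,0), (4,17,1,0)] := by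
  obtain ⟨E, hE⟩ : ∃ E, E = m ^ 2 * N := ⟨_, rfl⟩
  have hEpos : 0 < E := by rw [hE]; positivity
  rw [← hE] at h1 h2 heq
  have hm2 : 0 < m ^ 2 := by positivity
  have hg2 : 0 < g ^ 2 := by positivity
  have hE16 : 16 < E := by
    by_contra hle
    push Not at hle
    have ha : 256 * w ^ 2 < g ^ 2 * E ^ 2 := by nlinarith
    have hb : (16 - E) * (256 * w ^ 2) ≤ (16 - E) * (g ^ 2 * E ^ 2) :=
      mul_le_mul_of_nonneg_left ha.le (by linarith)
    have hc : (16 - E) * (g ^ 2 * E) * E ≤ (16 - E) * (g ^ 2 * E) * 16 :=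
      mul_le_mul_of_nonneg_left hle (mul_nonneg (by linarith) (by positivity))
    have hd : 0 < E * m ^ 2 := by positivity
    nlinarith
  obtain ⟨K, hK⟩ : ∃ K, K = E - 16 := ⟨_, rfl⟩
  have hKpos : 0 < K := by linarith
  rw [← hK] at heq
  have hgK : 16 * m ^ 2 ≤ g ^ 2 * K := by
    by_contra hlt
    push Not at hlt
    have : 0 ≤ 16 * K * w ^ 2 := by positivity
    have : E * (g ^ 2 * K - 16 * m ^ 2) < 0 := mul_neg_of_pos_of_neg hEpos (by linarith)
    linarith
  have hDK : 16 * E ≤ g ^ 2 * N * K := by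
    rw [hE]; nlinarith [mul_le_mul_of_nonneg_right hgK hN.le]
  have hD : 17 ≤ g ^ 2 * N := by
    by_contra hlt
    have : g ^ 2 * N ≤ 16 := by omega
    nlinarith [mul_le_mul_of_nonneg_right this hKpos.le]
  have hw : w ^ 2 < g ^ 2 := by nlinarith
  have hub : g ^ 2 * K ^ 2 < 16 * m ^ 2 * E := by
    have := mul_lt_mul_of_pos_left hw (show 0 < 16 * K by linarith)
    have hEK : E = K + 16 := by linarith
    have h3 : E * (g ^ 2 * K) = K * (g ^ 2 * K) + 16 * (g ^ 2 * K) := by rw [hEK]; ring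
    nlinarith
  have hub2 : g ^ 2 * N * K ^ 2 < 16 * E ^ 2 := by
    have := mul_lt_mul_of_pos_right hub hN
    have h4 : 16 * m ^ 2 * E * N = 16 * E ^ 2 := by rw [hE]; ring
    nlinarith
  have hE536 : E ≤ 536 := by
    have := mul_le_mul_of_nonneg_right hD (sq_nonneg K)
    rw [hK] at this hub2
    nlinarith
  have hg68 : g < 68 := by
    by_contra hge
    push Not at hge
    have h5 : E ≤ 17 * K := by linarith
    have h6 : (68 : ℤ) ^ 2 ≤ g ^ 2 := by nlinarith
    have h7 : 68 ^ 2 * K ^ 2 ≤ g ^ 2 * N * K ^ 2 := by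
      apply mul_le_mul_of_nonneg_right _ (sq_nonneg K)
      nlinarith
    nlinarith
  have hm24 : m < 24 := by
    by_contra hge
    push Not at hge
    nlinarith
  lift m to ℕ using hm.le
  lift N to ℕ using hN.le
  lift g to ℕ using hg.le
  lift K to ℕ using hKpos.le
  have hEn : m * m * N = K + 16 := by
    have : (m : ℤ) * m * N = K + 16 := by rw [hK, hE]; ring
    exact_mod_cast this
  have hEn' : m * m * N - 16 = K := by omega
  have hEz : E = (K : ℤ) + 16 := by linarith
  have hmn : 0 < m := by exact_mod_cast hm
  have hwn : w.natAbs * w.natAbs * 1 = w.natAbs ^ 2 := by ring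
  refine kite_enum m (by exact_mod_cast hm24) N ?_ ?_ g (by exact_mod_cast hg68) ?_ w.natAbs
    (by omega) ?_
  · rw [Nat.lt_succ_iff, Nat.le_div_iff_mul_le (by positivity)]
    have : K + 16 ≤ 536 := by omega
    nlinarith
  · omega
  · rw [hEn', hEn]
    rw [hEz] at hub2
    have : (g : ℤ) * g * N * (K * K) < 16 * ((K + 16) * (K + 16)) := by nlinarith
    exact_mod_cast this
  · rw [hEn', hEn]
    rw [hEz] at heq
    zify
    rw [abs_mul_abs_self]
    linarith

/-- The rotation taking one frame to another, moving the first base point to the second. -/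
noncomputable def rotMap (o o' z z' : ℝ × ℝ) (N : ℝ) (x : ℝ × ℝ) : ℝ × ℝ :=
  (o'.1 + ((z'.1 * z.1 + z'.2 * z.2) * (x.1 - o.1) - (z'.2 * z.1 - z'.1 * z.2) * (x.2 - o.2)) / N,
   o'.2 + ((z'.2 * z.1 - z'.1 * z.2) * (x.1 - o.1) + (z'.1 * z.1 + z'.2 * z.2) * (x.2 - o.2)) / N)

theorem rotMap_inv (o o' z z' : ℝ × ℝ) (N : ℝ) (hN : 0 < N) (hz : z.1 ^ 2 + z.2 ^ 2 = N)
    (hz' : z'.1 ^ 2 + z'.2 ^ 2 = N) (x : ℝ × ℝ) :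
    rotMap o' o z' z N (rotMap o o' z z' N x) = x := by
  have hN' := hN.ne'
  ext
  · simp only [rotMap]
    field_simp
    have : N ^ 2 = (z.1 ^ 2 + z.2 ^ 2) * (z'.1 ^ 2 + z'.2 ^ 2) := by rw [hz, hz']; ring
    rw [this]; ring
  · simp only [rotMap]
    field_simp
    have : N ^ 2 = (z.1 ^ 2 + z.2 ^ 2) * (z'.1 ^ 2 + z'.2 ^ 2) := by rw [hz, hz']; ring
    rw [this]; ring

theorem rotMap_isometry (o o' z z' : ℝ × ℝ) (N : ℝ) (hN : 0 < N) (hz : z.1 ^ 2 + z.2 ^ 2 = N)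
    (hz' : z'.1 ^ 2 + z'.2 ^ 2 = N) : IsIsometry2 (rotMap o o' z z' N) := by
  have hN' := hN.ne'
  refine ⟨Function.bijective_iff_has_inverse.2 ⟨rotMap o' o z' z N,
    rotMap_inv o o' z z' N hN hz hz', rotMap_inv o' o z' z N hN hz' hz⟩, ?_⟩
  intro p q
  unfold dist2
  congr 1
  simp only [rotMap]
  field_simp
  have : N ^ 2 = (z.1 ^ 2 + z.2 ^ 2) * (z'.1 ^ 2 + z'.2 ^ 2) := by rw [hz, hz']; ring
  rw [this]; ring

/-- A point with coordinates `(x, y)` in the frame goes to the same coordinates. -/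
theorem rotMap_apply (o o' z z' : ℝ × ℝ) (N : ℝ) (hN : 0 < N) (hz : z.1 ^ 2 + z.2 ^ 2 = N)
    (x y : ℝ) :
    rotMap o o' z z' N (o.1 + (x * z.1 - y * z.2), o.2 + (x * z.2 + y * z.1)) =
      (o'.1 + (x * z'.1 - y * z'.2), o'.2 + (x * z'.2 + y * z'.1)) := by
  have hN' := hN.ne'
  ext
  · simp only [rotMap]
    field_simp
    rw [← hz]; ring
  · simp only [rotMap]
    field_simp
    rw [← hz]; ring

/-- Congruence of kites in frame coordinates. -/
theorem kite_image (O A B C z : ℝ × ℝ) (g m s N : ℝ) (hN : 0 < N) (hz : z.1 ^ 2 + z.2 ^ 2 = N)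
    (hB : B = (O.1 + g * z.1, O.2 + g * z.2))
    (hA : A = (O.1 + (s * z.1 + m * z.2) / 2, O.2 + (s * z.2 - m * z.1) / 2))
    (hC : C = (O.1 + (s * z.1 - m * z.2) / 2, O.2 + (s * z.2 + m * z.1) / 2))
    (O' z' : ℝ × ℝ) (hz' : z'.1 ^ 2 + z'.2 ^ 2 = N) :
    ∃ φ : ℝ × ℝ → ℝ × ℝ, IsIsometry2 φ ∧ φ '' {O, A, B, C} =
      {O', (O'.1 + (s * z'.1 + m * z'.2) / 2, O'.2 + (s * z'.2 - m * z'.1) / 2),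
        (O'.1 + g * z'.1, O'.2 + g * z'.2),
        (O'.1 + (s * z'.1 - m * z'.2) / 2, O'.2 + (s * z'.2 + m * z'.1) / 2)} := by
  refine ⟨rotMap O O' z z' N, rotMap_isometry O O' z z' N hN hz hz', ?_⟩
  have key := rotMap_apply O O' z z' N hN hz
  have e1 : rotMap O O' z z' N O = O' := by
    have := key 0 0
    simpa using this
  have e2 : rotMap O O' z z' N B = (O'.1 + g * z'.1, O'.2 + g * z'.2) := by
    have := key g 0
    rw [hB]; simpa using this
  have e3 : rotMap O O' z z' N A =
      (O'.1 + (s * z'.1 + m * z'.2) / 2, O'.2 + (s * z'.2 - m * z'.1) / 2) := by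
    have := key (s / 2) (-(m / 2))
    rw [hA]; convert this using 2 <;> ring_nf
  have e4 : rotMap O O' z z' N C =
      (O'.1 + (s * z'.1 - m * z'.2) / 2, O'.2 + (s * z'.2 + m * z'.1) / 2) := by
    have := key (s / 2) (m / 2)
    rw [hC]; convert this using 2 <;> ring_nf
  simp only [Set.image_insert_eq, Set.image_singleton, e1, e2, e3, e4]

/-- Lattice structure of a kite: frame coordinates. -/
theorem kite_frame (p q b c r t : ℤ) (h1 : p ^ 2 + q ^ 2 = r ^ 2 + t ^ 2)
    (h2 : (p - b) ^ 2 + (q - c) ^ 2 = (b - r) ^ 2 + (c - t) ^ 2)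
    (hpos : 0 < b * (t - q) - c * (r - p)) :
    ∃ g m s u v : ℤ, 0 < g ∧ 0 < m ∧ 0 < u ^ 2 + v ^ 2 ∧ IsCoprime u v ∧ b = g * u ∧ c = g * v ∧
      2 * p = s * u + m * v ∧ 2 * q = s * v - m * u ∧
      2 * r = s * u - m * v ∧ 2 * t = s * v + m * u := by
  have hbc : b ≠ 0 ∨ c ≠ 0 := by
    by_contra h
    push Not at h
    rw [h.1, h.2] at hpos
    simp at hpos
  have hgpos : 0 < Int.gcd b c := Int.gcd_pos_iff.2 hbc
  obtain ⟨u, v, hco, hb, hc⟩ := Int.exists_gcd_one hgpos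
  obtain ⟨g, hg⟩ : ∃ g : ℤ, g = (Int.gcd b c : ℤ) := ⟨_, rfl⟩
  have hg0 : 0 < g := by rw [hg]; exact_mod_cast hgpos
  rw [← hg] at hb hc
  have hcop : IsCoprime u v := Int.isCoprime_iff_gcd_eq_one.2 hco
  subst hb hc
  have hN : 0 < u ^ 2 + v ^ 2 := by
    rcases hbc with h | h
    · have : u ≠ 0 := by rintro rfl; simp at h
      positivity
    · have : v ≠ 0 := by rintro rfl; simp at h
      positivity
  have hperp : (r - p) * u + (t - q) * v = 0 := by
    have : g * ((r - p) * u + (t - q) * v) = 0 := by nlinarith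
    rcases mul_eq_zero.1 this with h | h
    · omega
    · exact h
  have hW : 0 < u * (t - q) - v * (r - p) := by
    have : 0 < g * (u * (t - q) - v * (r - p)) := by linarith
    exact pos_of_mul_pos_right this hg0.le
  have hpar : u * (q + t) = v * (p + r) := by
    have : (u * (t - q) - v * (r - p)) * (u * (q + t) - v * (p + r)) = 0 := by
      linear_combination (-(u ^ 2 + v ^ 2)) * h1 - ((p + r) * u + (q + t) * v) * hperp
    rcases mul_eq_zero.1 this with h | h
    · omega
    · linarith
  obtain ⟨x, y, hxy⟩ := hcop
  have hm1 : (x * (t - q) - y * (r - p)) * u = t - q := by linear_combination (t - q) * hxy - y * hperp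
  have hm2 : (x * (t - q) - y * (r - p)) * v = -(r - p) := by
    linear_combination (-(r - p)) * hxy + x * hperp
  have hs1 : (x * (p + r) + y * (q + t)) * u = p + r := by
    linear_combination (p + r) * hxy + y * hpar
  have hs2 : (x * (p + r) + y * (q + t)) * v = q + t := by
    linear_combination (q + t) * hxy - x * hpar
  generalize x * (t - q) - y * (r - p) = m at *
  generalize x * (p + r) + y * (q + t) = s at *
  refine ⟨g, m, s, u, v, hg0, ?_, hN, ⟨x, y, hxy⟩, by ring, by ring, ?_, ?_, ?_, ?_⟩
  · have : m * (u ^ 2 + v ^ 2) = u * (t - q) - v * (r - p) := by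
      linear_combination u * hm1 + v * hm2
    rw [← this] at hW
    exact pos_of_mul_pos_left hW hN.le
  all_goals linarith

/-- Real lengths to the finite list. -/
theorem kite_params (g m N s : ℤ) (hg : 0 < g) (hm : 0 < m) (hN : 0 < N)
    (hs1 : 0 < s) (hs2 : s < 2 * g) (a b : ℝ) (ha : 0 ≤ a) (hb : 0 ≤ b)
    (ha2 : 4 * a ^ 2 = (s ^ 2 + m ^ 2) * N) (hb2 : 4 * b ^ 2 = ((2 * g - s) ^ 2 + m ^ 2) * N)
    (hab : 4 * (a + b) = g * m * N) :
    (m.natAbs, N.natAbs, g.natAbs, (s - g).natAbs) ∈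
      [(1,17,4,0), (1,18,4,3), (1,20,2,0), (1,32,1,0), (2,5,4,0), (2,5,6,5),
        (2,8,2,0), (2,20,1,0), (3,2,12,9), (4,2,4,0), (4,5,2,0), (4,17,1,0)] := by
  have hg' : (0 : ℝ) < g := by exact_mod_cast hg
  have hm' : (0 : ℝ) < m := by exact_mod_cast hm
  have hN' : (0 : ℝ) < N := by exact_mod_cast hN
  have hapos : 0 < a := by
    rcases ha.lt_or_eq with h | h
    · exact h
    · rw [← h] at ha2
      have : (0 : ℝ) < (s ^ 2 + m ^ 2) * N := by positivity
      norm_num at ha2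
      rcases ha2 with h | h
      · nlinarith [sq_nonneg (s : ℝ), pow_pos hm' 2]
      · subst h; omega
  have hbpos : 0 < b := by
    rcases hb.lt_or_eq with h | h
    · exact h
    · rw [← h] at hb2
      have : (0 : ℝ) < ((2 * g - s) ^ 2 + m ^ 2) * N := by positivity
      norm_num at hb2
      rcases hb2 with h | h
      · nlinarith [sq_nonneg (2 * g - s : ℝ), pow_pos hm' 2]
      · subst h; omega
  have hdiff : m * (a - b) = 4 * ((s : ℝ) - g) := by
    have h : (g * N : ℝ) * (m * (a - b)) = (g * N) * (4 * ((s : ℝ) - g)) := by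
      linear_combination (-(a - b)) * hab + ha2 - hb2
    exact mul_left_cancel₀ (by positivity) h
  have e1 : 8 * m * a = g * (m ^ 2 * N) + 16 * ((s : ℝ) - g) := by
    linear_combination m * hab + 4 * hdiff
  have e2 : 8 * m * b = g * (m ^ 2 * N) - 16 * ((s : ℝ) - g) := by
    linear_combination m * hab - 4 * hdiff
  have p1 : 0 < 8 * m * a := by positivity
  have p2 : 0 < 8 * m * b := by positivity
  rw [e1] at p1
  rw [e2] at p2
  have p1' : 0 < g * (m ^ 2 * N) + 16 * (s - g) := by exact_mod_cast p1
  have p2' : 0 < g * (m ^ 2 * N) - 16 * (s - g) := by exact_mod_cast p2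
  have hsq : (16 * m ^ 2 * ((s ^ 2 + m ^ 2) * N) : ℝ) =
      (g * (m ^ 2 * N) + 16 * ((s : ℝ) - g)) ^ 2 := by
    rw [← e1, ← ha2]; ring
  have hsq_int : 16 * m ^ 2 * ((s ^ 2 + m ^ 2) * N) = (g * (m ^ 2 * N) + 16 * (s - g)) ^ 2 := by
    exact_mod_cast hsq
  apply kite_arith g m N (s - g) hg hm hN (by linarith) (by linarith) (by linarith) (by linarith)
  linear_combination hsq_int

/-- Convex position puts the midpoint of `A C` strictly inside `O B`. -/
theorem kite_convex (O A B C z : ℝ × ℝ) (g m s : ℝ) (hg : 0 < g)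
    (hB : B = (O.1 + g * z.1, O.2 + g * z.2))
    (hA : A = (O.1 + (s * z.1 + m * z.2) / 2, O.2 + (s * z.2 - m * z.1) / 2))
    (hC : C = (O.1 + (s * z.1 - m * z.2) / 2, O.2 + (s * z.2 + m * z.1) / 2))
    (hconv : ConvexPos O A B C) : 0 < s ∧ s < 2 * g := by
  obtain ⟨hO, -, hB', -⟩ := hconv
  constructor
  · by_contra hle
    push Not at hle
    apply hO
    have hd : 0 < 2 * g - s := by linarith
    have h1 : A ∈ convexHull ℝ ({A, B, C} : Set (ℝ × ℝ)) := subset_convexHull _ _ (by simp)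
    have h2 : B ∈ convexHull ℝ ({A, B, C} : Set (ℝ × ℝ)) := subset_convexHull _ _ (by simp)
    have h3 : C ∈ convexHull ℝ ({A, B, C} : Set (ℝ × ℝ)) := subset_convexHull _ _ (by simp)
    have hc := convex_convexHull ℝ ({A, B, C} : Set (ℝ × ℝ))
    have h4 := hc h1 h3 (show (0 : ℝ) ≤ 1 / 2 by norm_num) (show (0 : ℝ) ≤ 1 / 2 by norm_num)
      (by norm_num)
    have h5 := hc h4 h2 (show 0 ≤ 2 * g / (2 * g - s) by positivity)
      (show 0 ≤ -s / (2 * g - s) from div_nonneg (by linarith) hd.le)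
      (by field_simp; ring)
    convert h5 using 1
    rw [hA, hB, hC]
    have := hd.ne'
    ext <;> simp <;> field_simp <;> ring
  · by_contra hle
    push Not at hle
    apply hB'
    have hs : 0 < s := by linarith
    have h1 : A ∈ convexHull ℝ ({O, A, C} : Set (ℝ × ℝ)) := subset_convexHull _ _ (by simp)
    have h2 : O ∈ convexHull ℝ ({O, A, C} : Set (ℝ × ℝ)) := subset_convexHull _ _ (by simp)
    have h3 : C ∈ convexHull ℝ ({O, A, C} : Set (ℝ × ℝ)) := subset_convexHull _ _ (by simp)
    have hc := convex_convexHull ℝ ({O, A, C} : Set (ℝ × ℝ))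
    have h4 := hc h1 h3 (show (0 : ℝ) ≤ 1 / 2 by norm_num) (show (0 : ℝ) ≤ 1 / 2 by norm_num)
      (by norm_num)
    have h5 := hc h4 h2 (show 0 ≤ 2 * g / s by positivity)
      (show 0 ≤ (s - 2 * g) / s from div_nonneg (by linarith) hs.le)
      (by field_simp; ring)
    convert h5 using 1
    rw [hA, hB, hC]
    have := hs.ne'
    ext <;> simp <;> field_simp <;> ring

theorem kite_cases_aux (g m s N : ℤ) (hg : 0 < g) (hm : 0 < m) (hN : 0 < N)
    (h4 : ¬ 4 ∣ N) (h3 : ¬ 3 ∣ N) (hpar : 2 ∣ m ↔ 2 ∣ s)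
    (h : (m.natAbs, N.natAbs, g.natAbs, (s - g).natAbs) ∈
      [(1,17,4,0), (1,18,4,3), (1,20,2,0), (1,32,1,0), (2,5,4,0), (2,5,6,5),
        (2,8,2,0), (2,20,1,0), (3,2,12,9), (4,2,4,0), (4,5,2,0), (4,17,1,0)]) :
    (m = 2 ∧ N = 5 ∧ g = 4 ∧ s = 4) ∨ (m = 3 ∧ N = 2 ∧ g = 12 ∧ s = 21) ∨
    (m = 3 ∧ N = 2 ∧ g = 12 ∧ s = 3) ∨ (m = 4 ∧ N = 2 ∧ g = 4 ∧ s = 4) ∨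
    (m = 4 ∧ N = 5 ∧ g = 2 ∧ s = 2) := by
  simp only [List.mem_cons, Prod.mk.injEq, List.not_mem_nil, or_false] at h
  generalize hw : s - g = w at h
  obtain rfl : s = g + w := by omega
  clear hw
  lift m to ℕ using hm.le
  lift N to ℕ using hN.le
  lift g to ℕ using hg.le
  simp only [Int.natAbs_natCast] at h
  rcases h with h | h | h | h | h | h | h | h | h | h | h | h <;>
    obtain ⟨rfl, rfl, rfl, hs1⟩ := h <;>
    rcases Int.natAbs_eq w with hw | hw <;> rw [hs1] at hw <;> subst hw <;>
    revert h4 h3 hpar <;> decide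

/-- Parity and primitivity leave only five cases. -/
theorem kite_cases (g m s u v p q : ℤ) (hg : 0 < g) (hm : 0 < m) (hN : 0 < u ^ 2 + v ^ 2)
    (hco : IsCoprime u v)
    (hp : 2 * p = s * u + m * v) (hq : 2 * q = s * v - m * u)
    (h : (m.natAbs, (u ^ 2 + v ^ 2).natAbs, g.natAbs, (s - g).natAbs) ∈
      [(1,17,4,0), (1,18,4,3), (1,20,2,0), (1,32,1,0), (2,5,4,0), (2,5,6,5),
        (2,8,2,0), (2,20,1,0), (3,2,12,9), (4,2,4,0), (4,5,2,0), (4,17,1,0)]) :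
    (m = 2 ∧ u ^ 2 + v ^ 2 = 5 ∧ g = 4 ∧ s = 4) ∨ (m = 3 ∧ u ^ 2 + v ^ 2 = 2 ∧ g = 12 ∧ s = 21) ∨
    (m = 3 ∧ u ^ 2 + v ^ 2 = 2 ∧ g = 12 ∧ s = 3) ∨ (m = 4 ∧ u ^ 2 + v ^ 2 = 2 ∧ g = 4 ∧ s = 4) ∨
    (m = 4 ∧ u ^ 2 + v ^ 2 = 5 ∧ g = 2 ∧ s = 2) := by
  have hodd : ¬ (2 ∣ u ∧ 2 ∣ v) := by
    rintro ⟨h1, h2⟩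
    have := hco.isUnit_of_dvd' h1 h2
    rw [Int.isUnit_iff] at this
    omega
  have hthree : ¬ (3 ∣ u ∧ 3 ∣ v) := by
    rintro ⟨h1, h2⟩
    have := hco.isUnit_of_dvd' h1 h2
    rw [Int.isUnit_iff] at this
    omega
  have h4 : ¬ (4 ∣ u ^ 2 + v ^ 2) := by
    intro h4
    apply hodd
    have hu : u % 4 = 0 ∨ u % 4 = 1 ∨ u % 4 = 2 ∨ u % 4 = 3 := by omega
    have hv : v % 4 = 0 ∨ v % 4 = 1 ∨ v % 4 = 2 ∨ v % 4 = 3 := by omega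
    have h5 := Int.emod_eq_zero_of_dvd h4
    rcases hu with hu | hu | hu | hu <;> rcases hv with hv | hv | hv | hv <;>
      first
      | (constructor <;> omega)
      | (simp [pow_two, Int.add_emod, Int.mul_emod, hu, hv] at h5)
  have h3 : ¬ (3 ∣ u ^ 2 + v ^ 2) := by
    intro h4
    apply hthree
    have hu : u % 3 = 0 ∨ u % 3 = 1 ∨ u % 3 = 2 := by omega
    have hv : v % 3 = 0 ∨ v % 3 = 1 ∨ v % 3 = 2 := by omega
    have h5 := Int.emod_eq_zero_of_dvd h4
    rcases hu with hu | hu | hu <;> rcases hv with hv | hv | hv <;>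
      first
      | (constructor <;> omega)
      | (simp [pow_two, Int.add_emod, Int.mul_emod, hu, hv] at h5)
  have hpar : (2 ∣ m ↔ 2 ∣ s) := by
    have e1 : 2 ∣ s * u + m * v := ⟨p, hp.symm⟩
    have e2 : 2 ∣ s * v - m * u := ⟨q, hq.symm⟩
    have hp2 : Prime (2 : ℤ) := Int.prime_two
    constructor
    · intro hm2
      have f1 : 2 ∣ s * u := (Int.dvd_add_left (hm2.mul_right v)).1 e1
      have f2 : 2 ∣ s * v := by
        have := dvd_add e2 (hm2.mul_right u)
        simpa using this
      rcases hp2.dvd_or_dvd f1 with h | h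
      · exact h
      · rcases hp2.dvd_or_dvd f2 with h' | h'
        · exact h'
        · exact absurd ⟨h, h'⟩ hodd
    · intro hs2
      have f1 : 2 ∣ m * v := (Int.dvd_add_right (hs2.mul_right u)).1 e1
      have f2 : 2 ∣ m * u := by
        have := dvd_sub (hs2.mul_right v) e2
        simpa using this
      rcases hp2.dvd_or_dvd f1 with h | h
      · exact h
      · rcases hp2.dvd_or_dvd f2 with h' | h'
        · exact h'
        · exact absurd ⟨h', h⟩ hodd
  generalize u ^ 2 + v ^ 2 = N at *
  exact kite_cases_aux g m s N hg hm hN h4 h3 hpar h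

/-- up to isometries of the plane there are exactly three convex
lattice equable kites. -/
theorem convex_lattice_equable_kites (O A B C : ℝ × ℝ)
    (hquad : IsQuad O A B C)
    (hlat : IsLatticePt O ∧ IsLatticePt A ∧ IsLatticePt B ∧ IsLatticePt C)
    (hequable : quadArea O A B C = quadPerim O A B C)
    (hkite : dist2 O A = dist2 O C ∧ dist2 A B = dist2 B C)
    (hconvex : ConvexPos O A B C) :
    ∃ φ : ℝ × ℝ → ℝ × ℝ, IsIsometry2 φ ∧
      (φ '' {O, A, B, C} =
         ({((0 : ℝ), (0 : ℝ)), ((4 : ℝ), (-3 : ℝ)), ((4 : ℝ), (2 : ℝ)), ((0 : ℝ), (5 : ℝ))} :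
           Set (ℝ × ℝ)) ∨
       φ '' {O, A, B, C} =
         ({((0 : ℝ), (0 : ℝ)), ((4 : ℝ), (0 : ℝ)), ((4 : ℝ), (4 : ℝ)), ((0 : ℝ), (4 : ℝ))} :
           Set (ℝ × ℝ)) ∨
       φ '' {O, A, B, C} =
         ({((0 : ℝ), (0 : ℝ)), ((12 : ℝ), (9 : ℝ)), ((12 : ℝ), (12 : ℝ)), ((9 : ℝ), (12 : ℝ))} :
           Set (ℝ × ℝ))) := by
  obtain ⟨⟨o1, o2, rfl⟩, ⟨a1, a2, rfl⟩, ⟨b1, b2, rfl⟩, ⟨c1, c2, rfl⟩⟩ := hlat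
  obtain ⟨-, hshoe⟩ := hquad
  obtain ⟨hk1, hk2⟩ := hkite
  have hk1' := hk1
  have hk2' := hk2
  have hk3 : dist2 ((c1 : ℝ), (c2 : ℝ)) ((o1 : ℝ), (o2 : ℝ)) =
      dist2 ((o1 : ℝ), (o2 : ℝ)) ((a1 : ℝ), (a2 : ℝ)) := by
    rw [hk1]; unfold dist2; congr 1; ring
  unfold dist2 at hk1' hk2'
  rw [Real.sqrt_inj (by positivity) (by positivity)] at hk1' hk2'
  simp only at hk1' hk2'
  have i1 : (a1 - o1) ^ 2 + (a2 - o2) ^ 2 = (c1 - o1) ^ 2 + (c2 - o2) ^ 2 := by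
    have : (o1 - a1) ^ 2 + (o2 - a2) ^ 2 = (o1 - c1) ^ 2 + (o2 - c2) ^ 2 := by exact_mod_cast hk1'
    linarith
  have i2 : (a1 - b1) ^ 2 + (a2 - b2) ^ 2 = (b1 - c1) ^ 2 + (b2 - c2) ^ 2 := by
    exact_mod_cast hk2'
  have i3 : 0 < (b1 - o1) * (c2 - a2) - (b2 - o2) * (c1 - a1) := by
    have : (0 : ℝ) < (b1 - o1) * (c2 - a2) - (b2 - o2) * (c1 - a1) := by
      unfold shoelace at hshoe
      simp only at hshoe
      linarith
    exact_mod_cast this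
  obtain ⟨g, m, s, u, v, hg, hm, hN, hco, hb1, hb2, hp, hq, hr, ht⟩ :=
    kite_frame (a1 - o1) (a2 - o2) (b1 - o1) (b2 - o2) (c1 - o1) (c2 - o2) i1
      (by linarith) (by linarith)
  have rb1 : (b1 : ℝ) = o1 + g * u := by
    have : b1 = o1 + g * u := by linarith
    exact_mod_cast this
  have rb2 : (b2 : ℝ) = o2 + g * v := by
    have : b2 = o2 + g * v := by linarith
    exact_mod_cast this
  have ra1 : (a1 : ℝ) = o1 + (s * u + m * v) / 2 := by
    have : (2 * (a1 - o1) : ℝ) = s * u + m * v := by exact_mod_cast hp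
    linarith
  have ra2 : (a2 : ℝ) = o2 + (s * v - m * u) / 2 := by
    have : (2 * (a2 - o2) : ℝ) = s * v - m * u := by exact_mod_cast hq
    linarith
  have rc1 : (c1 : ℝ) = o1 + (s * u - m * v) / 2 := by
    have : (2 * (c1 - o1) : ℝ) = s * u - m * v := by exact_mod_cast hr
    linarith
  have rc2 : (c2 : ℝ) = o2 + (s * v + m * u) / 2 := by
    have : (2 * (c2 - o2) : ℝ) = s * v + m * u := by exact_mod_cast ht
    linarith
  have hNr : (0 : ℝ) < (u : ℝ) ^ 2 + (v : ℝ) ^ 2 := by exact_mod_cast hN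
  have hgr : (0 : ℝ) < g := by exact_mod_cast hg
  have hconv := kite_convex ((o1 : ℝ), (o2 : ℝ)) (a1, a2) (b1, b2) (c1, c2) ((u : ℝ), (v : ℝ))
    g m s hgr (by simp only [rb1, rb2]) (by simp only [ra1, ra2]) (by simp only [rc1, rc2]) hconvex
  have hs1 : 0 < s := by exact_mod_cast hconv.1
  have hs2 : s < 2 * g := by exact_mod_cast hconv.2
  have himg := kite_image ((o1 : ℝ), (o2 : ℝ)) (a1, a2) (b1, b2) (c1, c2) ((u : ℝ), (v : ℝ))
    g m s _ hNr rfl (by simp only [rb1, rb2]) (by simp only [ra1, ra2]) (by simp only [rc1, rc2])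
  have hsh : shoelace ((o1 : ℝ), (o2 : ℝ)) (a1, a2) (b1, b2) (c1, c2) =
      g * m * ((u : ℝ) ^ 2 + (v : ℝ) ^ 2) := by
    unfold shoelace
    simp only [ra1, ra2, rb1, rb2, rc1, rc2]
    ring
  have hab : 4 * (dist2 ((o1 : ℝ), (o2 : ℝ)) ((a1 : ℝ), (a2 : ℝ)) +
      dist2 ((a1 : ℝ), (a2 : ℝ)) ((b1 : ℝ), (b2 : ℝ))) = g * m * ((u ^ 2 + v ^ 2 : ℤ) : ℝ) := by
    unfold quadArea quadPerim at hequable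
    rw [abs_of_pos hshoe, hk3, ← hk2, hsh] at hequable
    push_cast
    linarith
  have hlist := kite_params g m (u ^ 2 + v ^ 2) s hg hm hN hs1 hs2 _ _
    (Real.sqrt_nonneg _) (Real.sqrt_nonneg _)
    (by
      rw [Real.sq_sqrt (by positivity)]
      simp only [ra1, ra2]
      push_cast
      ring)
    (by
      rw [Real.sq_sqrt (by positivity)]
      simp only [ra1, ra2, rb1, rb2]
      push_cast
      ring) hab
  have hNc : ∀ k : ℤ, u ^ 2 + v ^ 2 = k → (u : ℝ) ^ 2 + (v : ℝ) ^ 2 = k := by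
    intro k hk; exact_mod_cast hk
  rcases kite_cases g m s u v _ _ hg hm hN hco hp hq hlist with
    ⟨rfl, hk, rfl, rfl⟩ | ⟨rfl, hk, rfl, rfl⟩ | ⟨rfl, hk, rfl, rfl⟩ | ⟨rfl, hk, rfl, rfl⟩ |
    ⟨rfl, hk, rfl, rfl⟩
  · obtain ⟨φ, hφ, him⟩ := himg (4, -3) (-1, 2) (by rw [hNc _ hk]; norm_num)
    refine ⟨φ, hφ, Or.inl (him.trans ?_)⟩
    norm_num
    ext x; simp only [Set.mem_insert_iff, Set.mem_singleton_iff]; tauto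
  · obtain ⟨φ, hφ, him⟩ := himg (0, 0) (1, 1) (by rw [hNc _ hk]; norm_num)
    refine ⟨φ, hφ, Or.inr (Or.inr (him.trans ?_))⟩
    norm_num
  · obtain ⟨φ, hφ, him⟩ := himg (12, 12) (-1, -1) (by rw [hNc _ hk]; norm_num)
    refine ⟨φ, hφ, Or.inr (Or.inr (him.trans ?_))⟩
    norm_num
    ext x; simp only [Set.mem_insert_iff, Set.mem_singleton_iff]; tauto
  · obtain ⟨φ, hφ, him⟩ := himg (0, 0) (1, 1) (by rw [hNc _ hk]; norm_num)
    refine ⟨φ, hφ, Or.inr (Or.inl (him.trans ?_))⟩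
    norm_num
  · obtain ⟨φ, hφ, him⟩ := himg (0, 0) (2, 1) (by rw [hNc _ hk]; norm_num)
    refine ⟨φ, hφ, Or.inl (him.trans ?_)⟩
    norm_num
end

section
/- Up to isometries of ℝ², there are exactly five trapezoids with integer side lengths whose area equals their perimeter. Every trapezoid with integer side lengths and area equal to perimeter can be mapped by an isometry of ℝ² onto one of the trapezoids with vertices: (0,0), (6,0), (6,4), (3,4) (right trapezoid, sides 6,4,3,5); (0,0), (10,0), (10,3), (4,3) (right trapezoid, sides 10,3,6,5); (0,0), (8,0), (5,4), (3,4) (isosceles trapezoid, sides 8,5,2,5); (0,0), (14,0), (10,3), (4,3) (isosceles trapezoid, sides 14,5,6,5); (0,0), (16,12), (12,12), (0,3) (trapezoid with sides 20,4,15,3). -/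
/-- `f n`, written so that the kernel evaluates `n` first. -/
def force {α : Type} (n : ℕ) (f : ℕ → α) : α :=
  match n with
  | 0 => f 0
  | m + 1 => f (m + 1)

theorem force_eq {α : Type} (n : ℕ) (f : ℕ → α) : force n f = f n := by
  cases n <;> rfl

/-- Newton iteration with fuel. -/
def newton : ℕ → ℕ → ℕ → ℕ
  | 0, _, x => x
  | f + 1, n, x =>
    force ((x + n / x) / 2) fun y => bif Nat.ble x y then x else newton f n y

/-- Candidate for the integer square root; its correctness is verified at each use. -/
def nsqrt (n : ℕ) : ℕ := force (2 ^ (Nat.log2 n / 2 + 1)) fun x => newton 30 n x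

/-- Certificate that `n` lies strictly between consecutive squares. -/
def badSq (r n : ℕ) : Bool := Nat.ble (r * r + 1) n && Nat.ble (n + 1) ((r + 1) * (r + 1))

/-- Test of one triple `(e, u, v)`: any solution is among the five known ones. -/
def trapChk (e u v : ℕ) : Bool :=
  force (u * v * (2 * e + u) * (2 * e - v)) fun K => force (nsqrt K) fun r =>
  bif Nat.beq (r * r) K then
    Nat.ble r (4 * e) ||
    (let j := r - 4 * e
     let m := 4 * e * (e + u)
     let s := m / j
     !(Nat.beq (s * j) m) || Nat.ble s (e + 1) || !(Nat.beq (s % 2) (e % 2)) ||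
       [(3, 6, 2, 9), (4, 4, 2, 16), (5, 2, 4, 35), (6, 4, 6, 10), (8, 2, 8, 20)].contains
         (e, u, v, s))
  else badSq r K

/-- The bound for `u` in the search. -/
def trapUB (e v : ℕ) : ℕ :=
  let N := v * (2 * e - v)
  bif Nat.ble N 16 then 301 else 32 * e / (N - 16) + 1

def trapAll : Bool :=
  (List.range 153).all fun e => (List.range (e + 1)).all fun v =>
    (List.range (trapUB e v)).all fun u' => force u' fun u =>
      !(Nat.beq (u % 2) (v % 2)) || trapChk e u v

set_option maxRecDepth 100000 in
theorem trapAll_true : trapAll = true := by decide +kernel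

/-- Test of one triple `(u, v, j)` in the case of large `e`. -/
def bigChk (u v j : ℕ) : Bool :=
  let A : ℤ := 4 * u * v - 16
  let H : ℤ := u * v * ((u : ℤ) - v) - 4 * j
  let D : ℤ := H * H + A * (u * u * v * v + j * j)
  force (nsqrt D.toNat) fun r =>
  bif Nat.beq (r * r) D.toNat then
    (decide ((r - H) % A ≠ 0) || decide (r - H ≤ 152 * A)) &&
    (decide ((-r - H) % A ≠ 0) || decide (-r - H ≤ 152 * A))
  else badSq r D.toNat

def divs (n : ℕ) : List ℕ := (List.range (n + 1)).filter fun g => Nat.beq (n % g) 0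

def bigM (u v : ℕ) : ℕ := u * u * (((2 * u * v + v * v : ℕ) : ℤ) - 16).natAbs

def bigAll : Bool :=
  (List.range 17).all fun u => (List.range 17).all fun v =>
    !(Nat.beq (u % 2) (v % 2)) || Nat.ble (u * v) 4 || Nat.ble 17 (u * v) ||
    ((divs (bigM u v)).all fun g => (divs (u * u * v * v)).all fun f => [1, 2, 4].all fun t =>
      bigChk u v (t * (f * g)))

set_option maxRecDepth 100000 in
theorem bigAll_true : bigAll = true := by decide +kernel

def midAll : Bool :=
  (List.range 9).all fun e => (List.range (e + 1)).all fun v => (List.range (4 * e + 1)).all fun s =>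
    let N := v * (2 * e - v)
    let X := N * s * s - 16 * e * e
    Nat.ble e 1 || Nat.beq v 0 || Nat.ble 17 N || Nat.beq X 0 ||
    (let D := 256 * e * e * e * e * s * s + X * (16 + N) * s * s * e * e
     force (nsqrt D) fun r =>
     bif Nat.beq (r * r) D then
       !(Nat.beq ((16 * e * e * s + r) % X) 0) || Nat.ble (16 * e * e * s + r) (300 * X)
     else badSq r D)

set_option maxRecDepth 100000 in
theorem midAll_true : midAll = true := by decide +kernel

theorem badSq_sq (r k : ℕ) : badSq r (k * k) = false := by
  by_contra h
  simp only [badSq, Bool.not_eq_false, Bool.and_eq_true, Nat.ble_eq] at h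
  obtain ⟨h1, h2⟩ := h
  have h3 : r < k := by
    by_contra h
    have := Nat.mul_le_mul (not_lt.mp h) (not_lt.mp h)
    omega
  have h4 : k < r + 1 := by
    by_contra h
    have := Nat.mul_le_mul (not_lt.mp h) (not_lt.mp h)
    omega
  omega

theorem trapAll_spec (e u v : ℕ) (he : e < 153) (hv : v ≤ e) (hu : u < trapUB e v)
    (hpar : u % 2 = v % 2) : trapChk e u v = true := by
  have h := trapAll_true
  simp only [trapAll, List.all_eq_true, List.mem_range, force_eq] at h
  have h1 := h e he v (by omega) u hu
  simpa [Nat.beq_eq, hpar] using h1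

theorem trapChk_spec (e u v s k j : ℕ) (hk : k = 4 * e + j) (hj : 1 ≤ j)
    (hK : u * v * (2 * e + u) * (2 * e - v) = k * k) (hsj : s * j = 4 * e * (e + u))
    (hs : e + 2 ≤ s) (hpar : s % 2 = e % 2) (h : trapChk e u v = true) :
    (e, u, v, s) ∈ [(3, 6, 2, 9), (4, 4, 2, 16), (5, 2, 4, 35), (6, 4, 6, 10), (8, 2, 8, 20)] := by
  simp only [trapChk, force_eq] at h
  rw [hK, badSq_sq] at h
  generalize nsqrt (k * k) = r at h
  by_cases hr : r * r = k * k
  · have hr' : r = k := Nat.mul_self_inj.mp hr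
    subst hr'
    have e1 : r - 4 * e = j := by omega
    have e2 : 4 * e * (e + u) / j = s := by
      rw [← hsj]; exact Nat.mul_div_cancel _ hj
    have e3 : Nat.ble r (4 * e) = false := by
      rw [Bool.eq_false_iff]; intro h; rw [Nat.ble_eq] at h; omega
    have e4 : Nat.ble s (e + 1) = false := by
      rw [Bool.eq_false_iff]; intro h; rw [Nat.ble_eq] at h; omega
    have e5 : ∀ n : ℕ, Nat.beq n n = true := fun n => by rw [Nat.beq_eq]
    rw [e1, e2, hsj, e3, e4, hpar] at h
    simp only [e5, cond_true, Bool.false_or, Bool.not_true] at h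
    rwa [List.contains_iff_mem] at h
  · have : Nat.beq (r * r) (k * k) = false := by
      rw [Bool.eq_false_iff]; intro h; rw [Nat.beq_eq] at h; exact hr h
    rw [this] at h
    simp at h

theorem mem_divs (n g : ℕ) (hn : 0 < n) (h : g ∣ n) : g ∈ divs n := by
  simp only [divs, List.mem_filter, List.mem_range, Nat.beq_eq]
  exact ⟨by have := Nat.le_of_dvd hn h; omega, Nat.mod_eq_zero_of_dvd h⟩

theorem bigAll_spec (u v t f g : ℕ) (hu : u < 17) (hv : v < 17) (hpar : u % 2 = v % 2)
    (h5 : 5 ≤ u * v) (h16 : u * v ≤ 16) (ht : t ∈ [1, 2, 4]) (hf : f ∣ u * u * v * v)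
    (hg : g ∣ bigM u v) (hM : 0 < bigM u v) : bigChk u v (t * (f * g)) = true := by
  have h := bigAll_true
  simp only [bigAll, List.all_eq_true, List.mem_range] at h
  have h1 := h u hu v hv
  have e3 : Nat.ble (u * v) 4 = false := by
    rw [Bool.eq_false_iff]; intro h; rw [Nat.ble_eq] at h; omega
  have e4 : Nat.ble 17 (u * v) = false := by
    rw [Bool.eq_false_iff]; intro h; rw [Nat.ble_eq] at h; omega
  have e5 : ∀ n : ℕ, Nat.beq n n = true := fun n => by rw [Nat.beq_eq]
  rw [e3, e4, hpar, e5] at h1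
  simp only [Bool.not_true, Bool.false_or, List.all_eq_true] at h1
  refine h1 g (mem_divs _ _ hM hg) f (mem_divs _ _ ?_ hf) t ht
  have : 0 < u * v := by omega
  have hu0 : 0 < u := by
    rcases Nat.eq_zero_or_pos u with h | h
    · simp [h] at this
    · exact h
  have hv0 : 0 < v := by
    rcases Nat.eq_zero_or_pos v with h | h
    · simp [h] at this
    · exact h
  positivity

theorem bigChk_spec (e u v j : ℕ) (he : 153 ≤ e) (h5 : 5 ≤ u * v)
    (hq : (j : ℤ) ^ 2 + 8 * e * j =
      (4 * u * v - 16) * e ^ 2 + 2 * u * v * ((u : ℤ) - v) * e - u ^ 2 * v ^ 2)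
    (h : bigChk u v j = true) : False := by
  simp only [bigChk, force_eq] at h
  have hA : (0 : ℤ) < 4 * u * v - 16 := by
    have : (5 : ℤ) ≤ u * v := by exact_mod_cast h5
    nlinarith
  generalize hAA : (4 * u * v - 16 : ℤ) = A at h hA hq
  generalize hHH : (u * v * ((u : ℤ) - v) - 4 * j : ℤ) = H at h
  have hD : H * H + A * (u * u * v * v + j * j) = (A * e + H) * (A * e + H) := by
    subst hHH
    linear_combination A * hq
  rw [hD] at h
  obtain ⟨k, hk⟩ : ∃ k : ℕ, (k : ℤ) = |A * e + H| := ⟨(A * e + H).natAbs, by simp⟩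
  have hkk : ((A * e + H) * (A * e + H)).toNat = k * k := by
    rw [← abs_mul_abs_self, ← hk]
    exact_mod_cast Int.toNat_natCast (k * k)
  rw [hkk, badSq_sq] at h
  generalize nsqrt (k * k) = r at h
  by_cases hr : r * r = k * k
  · have hr' : r = k := Nat.mul_self_inj.mp hr
    subst hr'
    have e5 : ∀ n : ℕ, Nat.beq n n = true := fun n => by rw [Nat.beq_eq]
    simp only [e5, cond_true, Bool.and_eq_true, Bool.or_eq_true, decide_eq_true_eq] at h
    have he' : (153 : ℤ) ≤ e := by exact_mod_cast he
    rcases abs_choice (A * e + H) with h1 | h1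
    · rw [h1] at hk
      have h2 : (r : ℤ) - H = A * e := by rw [hk]; ring
      rw [h2] at h
      rcases h.1 with h3 | h3
      · exact h3 (Int.mul_emod_right _ _)
      · nlinarith
    · rw [h1] at hk
      have h2 : -(r : ℤ) - H = A * e := by rw [hk]; ring
      rw [h2] at h
      rcases h.2 with h3 | h3
      · exact h3 (Int.mul_emod_right _ _)
      · nlinarith
  · have : Nat.beq (r * r) (k * k) = false := by
      rw [Bool.eq_false_iff]; intro h; rw [Nat.beq_eq] at h; exact hr h
    rw [this] at h
    simp at h

theorem mid_spec (e v s p N : ℕ) (he : 2 ≤ e) (he8 : e ≤ 8) (hv : 1 ≤ v) (hve : v ≤ e)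
    (hs : s ≤ 4 * e) (hN : N = v * (2 * e - v)) (hN16 : N ≤ 16) (hp : 301 ≤ p)
    (hs0 : 0 < s)
    (hq : 16 * (e : ℤ) ^ 2 * (s + p) ^ 2 = N * s ^ 2 * (p ^ 2 - e ^ 2)) : False := by
  have h := midAll_true
  simp only [midAll, List.all_eq_true, List.mem_range, force_eq] at h
  have h1 := h e (by omega) v (by omega) s (by omega)
  rw [← hN] at h1
  have hX : 16 * e * e < N * s * s := by
    by_contra hc
    have hc' : ((N * s * s : ℕ) : ℤ) ≤ ((16 * e * e : ℕ) : ℤ) := by exact_mod_cast not_lt.mp hc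
    push_cast at hc'
    have hp0 : (0 : ℤ) < p := by exact_mod_cast (by omega : 0 < p)
    have hs0 : (0 : ℤ) < s := by exact_mod_cast hs0
    have he0 : (0 : ℤ) < e := by exact_mod_cast (by omega : 0 < e)
    have hN0 : (0 : ℤ) ≤ N := by positivity
    have : 16 * (e : ℤ) ^ 2 * (s + p) ^ 2 - N * s ^ 2 * (p ^ 2 - e ^ 2) > 0 := by
      have h1 : 0 ≤ (16 * (e : ℤ) * e - N * s * s) * p ^ 2 := mul_nonneg (by linarith) (by positivity)
      have h2 : 0 < 16 * (e : ℤ) ^ 2 * (s ^ 2 + 2 * s * p) := by positivity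
      have h3 : 0 ≤ N * (s : ℤ) ^ 2 * e ^ 2 := by positivity
      nlinarith
    linarith
  obtain ⟨X, hXX⟩ : ∃ X, N * s * s - 16 * e * e = X := ⟨_, rfl⟩
  have hX1 : N * s * s = 16 * e * e + X := by omega
  have hX0 : 0 < X := by omega
  have hXz : (N : ℤ) * s * s = 16 * e * e + X := by exact_mod_cast hX1
  rw [hXX] at h1
  have b1 : Nat.ble e 1 = false := by
    rw [Bool.eq_false_iff]; intro h; rw [Nat.ble_eq] at h; omega
  have b2 : Nat.beq v 0 = false := by
    rw [Bool.eq_false_iff]; intro h; rw [Nat.beq_eq] at h; omega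
  have b3 : Nat.ble 17 N = false := by
    rw [Bool.eq_false_iff]; intro h; rw [Nat.ble_eq] at h; omega
  have b4 : Nat.beq X 0 = false := by
    rw [Bool.eq_false_iff]; intro h; rw [Nat.beq_eq] at h; omega
  rw [b1, b2, b3, b4] at h1
  simp only [Bool.false_or] at h1
  have hXp : (X : ℤ) * p ^ 2 = 32 * e ^ 2 * s * p + (16 + N) * s ^ 2 * e ^ 2 := by
    linear_combination (-(p : ℤ) ^ 2) * hXz - hq
  have hD : ((256 * e * e * e * e * s * s + X * (16 + N) * s * s * e * e : ℕ) : ℤ) =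
      (X * p - 16 * e * e * s) * (X * p - 16 * e * e * s) := by
    push_cast
    linear_combination (-(X : ℤ)) * hXp
  have hpos : 16 * e * e * s ≤ X * p := by
    by_contra hc
    have hc' : ((X * p : ℕ) : ℤ) < ((16 * e * e * s : ℕ) : ℤ) := by exact_mod_cast not_le.mp hc
    push_cast at hc'
    have hp0 : (0 : ℤ) < p := by exact_mod_cast (by omega : 0 < p)
    have h2 : (X : ℤ) * p * p < 16 * e * e * s * p := mul_lt_mul_of_pos_right hc' hp0
    have h3 : (0 : ℤ) ≤ (16 + N) * s ^ 2 * e ^ 2 := by positivity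
    have h4 : (0 : ℤ) ≤ 16 * e * e * s * p := by positivity
    nlinarith
  obtain ⟨k, hk⟩ := Nat.exists_eq_add_of_le hpos
  have hDk : 256 * e * e * e * e * s * s + X * (16 + N) * s * s * e * e = k * k := by
    have hkz : (X : ℤ) * p = 16 * e * e * s + k := by exact_mod_cast hk
    have : (X : ℤ) * p - 16 * e * e * s = k := by linarith
    rw [this] at hD
    exact_mod_cast hD
  rw [hDk, badSq_sq] at h1
  generalize nsqrt (k * k) = r at h1
  by_cases hr : r * r = k * k
  · have hr' : r = k := Nat.mul_self_inj.mp hr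
    subst hr'
    rw [← hk] at h1
    have e5 : ∀ n : ℕ, Nat.beq n n = true := fun n => by rw [Nat.beq_eq]
    simp only [e5, cond_true, Nat.mul_mod_right, Bool.not_true, Bool.false_or, Nat.ble_eq] at h1
    have := Nat.mul_le_mul_left X hp
    omega
  · have : Nat.beq (r * r) (k * k) = false := by
      rw [Bool.eq_false_iff]; intro h; rw [Nat.beq_eq] at h; exact hr h
    rw [this] at h1
    simp at h1

theorem large_case (e u v j : ℕ) (he : 153 ≤ e) (hu : u < 17) (hv : v < 17)
    (hpar : u % 2 = v % 2) (h5 : 5 ≤ u * v) (h16 : u * v ≤ 16)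
    (hq : (j : ℤ) ^ 2 + 8 * e * j =
      (4 * u * v - 16) * e ^ 2 + 2 * u * v * ((u : ℤ) - v) * e - u ^ 2 * v ^ 2)
    (hj : j ∣ 4 * (e * (e + u))) : False := by
  have hM : 0 < bigM u v := by
    interval_cases u <;> interval_cases v <;> first | (exfalso; omega) | decide
  have hg1 : Nat.gcd j e ∣ u * u * v * v := by
    have a1 : ((Nat.gcd j e : ℕ) : ℤ) ∣ j := by exact_mod_cast Nat.gcd_dvd_left j e
    have a2 : ((Nat.gcd j e : ℕ) : ℤ) ∣ e := by exact_mod_cast Nat.gcd_dvd_right j e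
    have : ((Nat.gcd j e : ℕ) : ℤ) ∣ ((u * u * v * v : ℕ) : ℤ) := by
      have h : ((u * u * v * v : ℕ) : ℤ) =
          e * ((4 * u * v - 16) * e + 2 * u * v * ((u : ℤ) - v)) - j * (j + 8 * e) := by
        push_cast
        linear_combination hq
      rw [h]
      exact dvd_sub (Dvd.dvd.mul_right a2 _) (Dvd.dvd.mul_right a1 _)
    exact_mod_cast this
  have hg2 : Nat.gcd j (e + u) ∣ bigM u v := by
    have a1 : ((Nat.gcd j (e + u) : ℕ) : ℤ) ∣ j := by exact_mod_cast Nat.gcd_dvd_left j (e + u)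
    have a2 : ((Nat.gcd j (e + u) : ℕ) : ℤ) ∣ (e + u : ℤ) := by
      exact_mod_cast Nat.gcd_dvd_right j (e + u)
    have : ((Nat.gcd j (e + u) : ℕ) : ℤ) ∣ (u * u : ℤ) * (((2 * u * v + v * v : ℕ) : ℤ) - 16) := by
      have h : (u * u : ℤ) * (((2 * u * v + v * v : ℕ) : ℤ) - 16) =
          j * (j + 8 * e) - (e + u) * ((4 * u * v - 16) * (e - u) + 2 * u * v * ((u : ℤ) - v)) := by
        push_cast
        linear_combination -hq
      rw [h]
      exact dvd_sub (Dvd.dvd.mul_right a1 _) (Dvd.dvd.mul_right a2 _)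
    have h2 := Int.natAbs_dvd_natAbs.mpr this
    rw [Int.natAbs_mul, Int.natAbs_mul] at h2
    simpa [bigM] using h2
  have hjd : j ∣ 4 * (u * u * v * v * bigM u v) := by
    have h1 : j ∣ Nat.gcd j (4 * (e * (e + u))) := Nat.dvd_gcd dvd_rfl hj
    have h2 := Nat.gcd_mul_right_dvd_mul_gcd j 4 (e * (e + u))
    have h3 := Nat.gcd_mul_right_dvd_mul_gcd j e (e + u)
    exact h1.trans (h2.trans (mul_dvd_mul (Nat.gcd_dvd_right _ _)
      (h3.trans (mul_dvd_mul hg1 hg2))))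
  obtain ⟨t, x, ht, hx, rfl⟩ := (Nat.dvd_mul).mp hjd
  obtain ⟨f, g, hf, hg, rfl⟩ := (Nat.dvd_mul).mp hx
  have ht4 : t ∈ [1, 2, 4] := by
    have := Nat.le_of_dvd (by norm_num) ht
    interval_cases t <;> simp_all
  exact bigChk_spec e u v _ he h5 hq (bigAll_spec u v t f g hu hv hpar h5 h16 ht4 hf hg hM)

set_option maxHeartbeats 4000000 in
theorem uv_le_sixteen (e q u v : ℕ) (heq : e = q + v) (hu : 1 ≤ u) (hv : 1 ≤ v)
    (hpar : u % 2 = v % 2) (he : 153 ≤ e) (huv : u * v ≤ 35) (hu35 : u ≤ 35) (hv35 : v ≤ 35)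
    (hB : u * v * (2 * q + v) < 16 * (2 * e + u)) : u * v ≤ 16 := by
  interval_cases u <;> interval_cases v <;> omega

set_option maxHeartbeats 1000000 in
theorem trap_core (e q u v s : ℕ) (heq : e = q + v) (hu : 1 ≤ u) (hv : 1 ≤ v)
    (hpar : u % 2 = v % 2) (hs : e + 2 ≤ s) (hse : s % 2 = e % 2)
    (hE : 16 * e ^ 2 * (s + (e + u)) ^ 2 = s ^ 2 * (u * v * (2 * e + u) * (2 * q + v))) :
    (e, u, v, s) ∈ [(3, 6, 2, 9), (4, 4, 2, 16), (5, 2, 4, 35), (6, 4, 6, 10), (8, 2, 8, 20)] := by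
  have he1 : 1 ≤ e := by omega
  have hw : 2 * e - v = 2 * q + v := by omega
  have hdv : s ∣ 4 * e * (s + (e + u)) := by
    have : s ^ 2 ∣ (4 * e * (s + (e + u))) ^ 2 := ⟨_, by rw [← hE]; ring⟩
    exact (Nat.pow_dvd_pow_iff (by norm_num)).mp this
  obtain ⟨k, hk⟩ := hdv
  have hs0 : 0 < s := by omega
  have hK : u * v * (2 * e + u) * (2 * q + v) = k * k := by
    have : s ^ 2 * (u * v * (2 * e + u) * (2 * q + v)) = s ^ 2 * (k * k) := by
      rw [← hE]
      calc 16 * e ^ 2 * (s + (e + u)) ^ 2 = (4 * e * (s + (e + u))) ^ 2 := by ring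
        _ = s ^ 2 * (k * k) := by rw [hk]; ring
    exact Nat.eq_of_mul_eq_mul_left (by positivity) this
  have hk4 : 4 * e < k := by
    by_contra hc
    have h1 := Nat.mul_le_mul_left s (not_lt.mp hc)
    have h2 : 0 < e * (e + u) := by positivity
    linarith
  obtain ⟨j, rfl⟩ := Nat.exists_eq_add_of_lt hk4
  obtain ⟨i, hi⟩ : ∃ i, i = j + 1 := ⟨_, rfl⟩
  rw [add_assoc, ← hi] at hK hk
  have hi1 : 1 ≤ i := by omega
  have hsi : s * i = 4 * e * (e + u) := by linarith
  clear hk4 hi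
  -- the basic bound
  have hi4 : i < 4 * (e + u) := by
    by_contra hc
    have h1 := Nat.mul_le_mul hs (not_lt.mp hc)
    have h2 : 0 < e + u := by positivity
    linarith
  have hB : u * v * (2 * q + v) < 16 * (2 * e + u) := by
    have h1 : 4 * e + i < 4 * (2 * e + u) := by omega
    have h2 : (4 * e + i) * (4 * e + i) < 4 * (2 * e + u) * (4 * (2 * e + u)) :=
      Nat.mul_lt_mul'' h1 h1
    rw [← hK] at h2
    have h3 : (2 * e + u) * (u * v * (2 * q + v)) < (2 * e + u) * (16 * (2 * e + u)) := by
      linarith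
    exact Nat.lt_of_mul_lt_mul_left h3
  have hve : v ≤ e := by omega
  have fin : e < 153 → u < trapUB e v →
      (e, u, v, s) ∈
        [(3, 6, 2, 9), (4, 4, 2, 16), (5, 2, 4, 35), (6, 4, 6, 10), (8, 2, 8, 20)] := by
    intro h1 h2
    exact trapChk_spec e u v s (4 * e + i) i rfl hi1 (by rw [hw]; exact hK) hsi hs hse
      (trapAll_spec e u v h1 hve h2 hpar)
  have hKz : ((u : ℤ) * v * (2 * e + u) * (2 * e - v)) = (4 * e + i) * (4 * e + i) := by
    have h1 : (u : ℤ) * v * (2 * e + u) * (2 * q + v) = (4 * e + i) * (4 * e + i) := by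
      exact_mod_cast hK
    have h2 : (e : ℤ) = q + v := by exact_mod_cast heq
    rw [← h1, h2]; ring
  by_cases hbig : 153 ≤ e
  · exfalso
    have huv : u * v ≤ 35 := by
      by_contra hc
      have h1 : 36 ≤ u * v := by omega
      -- u v (q + e) < 32 e + 16 u
      have h2 : u * v * e ≤ u * v * (2 * q + v) := Nat.mul_le_mul_left _ (by omega)
      have h3 : u ≤ u * v := Nat.le_mul_of_pos_right _ hv
      obtain ⟨f, hf⟩ := Nat.exists_eq_add_of_le hbig
      have h4 := Nat.mul_le_mul_right (137 + f) h1
      clear * - h2 h3 h4 hB hf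
      subst hf
      linarith
    have hu35 : u ≤ 35 := le_trans (Nat.le_mul_of_pos_right _ hv) huv
    have hv35 : v ≤ 35 := le_trans (Nat.le_mul_of_pos_left _ hu) huv
    have huv16 : u * v ≤ 16 := by
      by_contra hc
      exact hc (uv_le_sixteen e q u v heq hu hv hpar hbig huv hu35 hv35 hB)
    have hu16 : u < 17 := lt_of_le_of_lt (Nat.le_mul_of_pos_right _ hv) (by omega)
    have hv16 : v < 17 := lt_of_le_of_lt (Nat.le_mul_of_pos_left _ hu) (by omega)
    have huv5 : 5 ≤ u * v := by
      by_contra hc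
      have hez : (153 : ℤ) ≤ e := by exact_mod_cast hbig
      have hiz : (1 : ℤ) ≤ i := by exact_mod_cast hi1
      clear fin hK hE hsi hk hB
      have hu4 : u ≤ 4 := le_trans (Nat.le_mul_of_pos_right _ hv) (by omega)
      have hv4 : v ≤ 4 := le_trans (Nat.le_mul_of_pos_left _ hu) (by omega)
      interval_cases u <;> interval_cases v <;> first | (exfalso; omega) | (push_cast at hKz; nlinarith)
    refine large_case e u v i hbig hu16 hv16 hpar huv5 huv16 ?_ ⟨s, by rw [← mul_assoc, ← hsi]; ring⟩
    linear_combination -hKz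
  · have he153 : e < 153 := by omega
    by_cases hu2 : u < trapUB e v
    · exact fin he153 hu2
    exfalso
    have hBN : u * (v * (2 * e - v)) < 16 * (2 * e + u) := by rw [hw]; linarith
    rw [trapUB] at hu2
    obtain ⟨N, hN⟩ : ∃ N, N = v * (2 * e - v) := ⟨_, rfl⟩
    rw [← hN] at hu2 hBN
    by_cases hN16 : N ≤ 16
    · have : Nat.ble N 16 = true := by rwa [Nat.ble_eq]
      simp only [this, cond_true] at hu2
      have hNe : 2 * e - 1 ≤ N := by
        rw [hN, hw]
        obtain ⟨w, rfl⟩ := Nat.exists_eq_add_of_le hv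
        have : 2 * e - 1 = 2 * q + 2 * w + 1 := by omega
        rw [this]
        have := Nat.zero_le (w * (2 * q + w))
        linarith
      have he8 : e ≤ 8 := by omega
      have hNz : (N : ℤ) = v * (2 * e - v) := by
        have h2 : (e : ℤ) = q + v := by exact_mod_cast heq
        rw [hN, hw, h2]; push_cast; ring
      have hKN : (N : ℤ) * ((e + u) ^ 2 - e ^ 2) = (4 * e + i) * (4 * e + i) := by
        rw [hNz, ← hKz]; ring
      have huz : (301 : ℤ) ≤ u := by exact_mod_cast not_lt.mp hu2
      have he8z : (e : ℤ) ≤ 8 := by exact_mod_cast he8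
      have he1z : (1 : ℤ) ≤ e := by exact_mod_cast he1
      have hi1z : (1 : ℤ) ≤ i := by exact_mod_cast hi1
      by_cases he2 : e = 1
      · have hv1 : v = 1 := by omega
        have hN1 : N = 1 := by rw [hN, hv1, he2]
        rw [hN1, he2] at hKN
        push_cast at hKN
        clear * - hKN huz hi1z
        have h0 : (4 + (i : ℤ)) ^ 2 < (1 + u) ^ 2 := by linarith
        have h1 : (4 + (i : ℤ)) < 1 + u := lt_of_pow_lt_pow_left₀ 2 (by linarith) h0
        have h2 : (4 + (i : ℤ)) ^ 2 ≤ u ^ 2 := pow_le_pow_left₀ (by linarith) (by linarith) 2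
        linarith
      · have hN3 : (3 : ℤ) ≤ N := by exact_mod_cast (by omega : 3 ≤ N)
        have hip : (e + u : ℤ) ≤ i := by
          by_contra hc
          have hc : (i : ℤ) < e + u := not_le.mp hc
          have h1 : (4 * e + i : ℤ) * (4 * e + i) ≤ (32 + (e + u)) * (32 + (e + u)) := by
            apply mul_self_le_mul_self <;> linarith
          have h2 : (3 : ℤ) * ((e + u) ^ 2 - e ^ 2) ≤ N * ((e + u) ^ 2 - e ^ 2) := by
            apply mul_le_mul_of_nonneg_right hN3
            clear * - huz he1z
            nlinarith
          have h3 : (e : ℤ) ^ 2 ≤ 64 := by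
            clear * - he8z he1z
            nlinarith
          clear * - h1 h2 h3 huz hKN he1z
          nlinarith
        have hip' : e + u ≤ i := by exact_mod_cast hip
        have hs4 : s ≤ 4 * e := by
          have h1 := Nat.mul_le_mul_left s hip'
          rw [hsi] at h1
          exact Nat.le_of_mul_le_mul_right h1 (by omega)
        refine mid_spec e v s (e + u) N (by omega) he8 hv hve hs4 hN hN16 (by omega) hs0 ?_
        have hsz : (s : ℤ) * i = 4 * e * (e + u) := by exact_mod_cast hsi
        have h4 : (4 * e * (s + (e + u)) : ℤ) = s * (4 * e + i) := by linear_combination -hsz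
        push_cast
        linear_combination (4 * e * (s + (e + u)) + s * (4 * e + i) : ℤ) * h4 - (s : ℤ) ^ 2 * hKN
    · have : Nat.ble N 16 = false := by
        rw [Bool.eq_false_iff]; intro h; rw [Nat.ble_eq] at h; omega
      simp only [this, cond_false] at hu2
      apply hu2
      rw [Nat.lt_add_one_iff, Nat.le_div_iff_mul_le (by omega)]
      obtain ⟨n, rfl⟩ := Nat.exists_eq_add_of_le (le_of_not_ge hN16)
      simp only [Nat.add_sub_cancel_left]
      linarith

theorem isom_mk (α β σ m n : ℝ) (h : α ^ 2 + β ^ 2 = 1) (hσ : σ ^ 2 = 1) :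
    IsIsometry2 (fun P : ℝ × ℝ => (α * P.1 - σ * β * P.2 + m, β * P.1 + σ * α * P.2 + n)) := by
  refine ⟨⟨?_, ?_⟩, ?_⟩
  · rintro ⟨x, y⟩ ⟨x', y'⟩ hP
    simp only [Prod.mk.injEq] at hP
    obtain ⟨h1, h2⟩ := hP
    have hx : x = x' := by
      linear_combination α * h1 + β * h2 - (x - x') * h
    have hy : y = y' := by
      linear_combination (-σ * β) * h1 + σ * α * h2 - σ ^ 2 * (y - y') * h - (y - y') * hσ
    rw [hx, hy]
  · rintro ⟨X, Y⟩
    refine ⟨(α * (X - m) + β * (Y - n), -σ * β * (X - m) + σ * α * (Y - n)), ?_⟩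
    simp only [Prod.mk.injEq]
    constructor
    · linear_combination (X - m) * h + (β ^ 2 * (X - m) - α * β * (Y - n)) * hσ
    · linear_combination (Y - n) * h + (α ^ 2 * (Y - n) - α * β * (X - m)) * hσ
  · rintro ⟨x, y⟩ ⟨x', y'⟩
    simp only [dist2]
    congr 1
    linear_combination ((x - x') ^ 2 + σ ^ 2 * (y - y') ^ 2) * h + (y - y') ^ 2 * hσ

/-- The set `S` can be mapped by an isometry onto one of the five trapezoids. -/
def GoodSet (S : Set (ℝ × ℝ)) : Prop :=
    ∃ φ : ℝ × ℝ → ℝ × ℝ, IsIsometry2 φ ∧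
      (φ '' S =
         ({((0 : ℝ), (0 : ℝ)), ((6 : ℝ), (0 : ℝ)), ((6 : ℝ), (4 : ℝ)), ((3 : ℝ), (4 : ℝ))} :
           Set (ℝ × ℝ)) ∨
       φ '' S =
         ({((0 : ℝ), (0 : ℝ)), ((10 : ℝ), (0 : ℝ)), ((10 : ℝ), (3 : ℝ)), ((4 : ℝ), (3 : ℝ))} :
           Set (ℝ × ℝ)) ∨
       φ '' S =
         ({((0 : ℝ), (0 : ℝ)), ((8 : ℝ), (0 : ℝ)), ((5 : ℝ), (4 : ℝ)), ((3 : ℝ), (4 : ℝ))} :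
           Set (ℝ × ℝ)) ∨
       φ '' S =
         ({((0 : ℝ), (0 : ℝ)), ((14 : ℝ), (0 : ℝ)), ((10 : ℝ), (3 : ℝ)), ((4 : ℝ), (3 : ℝ))} :
           Set (ℝ × ℝ)) ∨
       φ '' S =
         ({((0 : ℝ), (0 : ℝ)), ((16 : ℝ), (12 : ℝ)), ((12 : ℝ), (12 : ℝ)), ((0 : ℝ), (3 : ℝ))} :
           Set (ℝ × ℝ)))

theorem GoodSet.of_image {S : Set (ℝ × ℝ)} {ψ : ℝ × ℝ → ℝ × ℝ} (hψ : IsIsometry2 ψ)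
    (h : GoodSet (ψ '' S)) : GoodSet S := by
  obtain ⟨φ, hφ, h⟩ := h
  refine ⟨φ ∘ ψ, ⟨hφ.1.comp hψ.1, fun p q => ?_⟩, ?_⟩
  · simp only [Function.comp_apply, hφ.2, hψ.2]
  · simpa only [Set.image_comp] using h

theorem image_four (f : ℝ × ℝ → ℝ × ℝ) (P Q R S : ℝ × ℝ) :
    f '' {P, Q, R, S} = {f P, f Q, f R, f S} := by
  simp only [Set.image_insert_eq, Set.image_singleton]

/-- Trapezoid in normal position, with the left leg not longer than the right one. -/
theorem normal_le (a b c d : ℤ) (x h : ℝ) (hc : 0 < c) (hac : c < a) (hd : 0 ≤ d) (hdb : d ≤ b)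
    (hh : 0 < h) (h1 : x ^ 2 + h ^ 2 = (d : ℝ) ^ 2) (h2 : (a - c - x) ^ 2 + h ^ 2 = (b : ℝ) ^ 2)
    (h3 : ((a : ℝ) + c) * h = 2 * (a + b + c + d)) :
    GoodSet {(0, 0), ((a : ℝ), 0), (x + c, h), (x, h)} := by
  have hdR : (0 : ℝ) ≤ d := by exact_mod_cast hd
  have hbR : (0 : ℝ) ≤ b := by exact_mod_cast hd.trans hdb
  have hh2 : 0 < h ^ 2 := by positivity
  have hxd : |x| < d := abs_lt_of_sq_lt_sq (by linarith) hdR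
  have hxb : |(a : ℝ) - c - x| < b := abs_lt_of_sq_lt_sq (by linarith) hbR
  have hxd := abs_lt.mp hxd
  have hxb := abs_lt.mp hxb
  have hu : a - c < b + d := by
    have : (a : ℝ) - c < b + d := by linarith
    exact_mod_cast this
  have heR : (0 : ℝ) < a - c := by
    have : (c : ℝ) < a := by exact_mod_cast hac
    linarith
  have hv : b < a - c + d := by
    have : (b : ℝ) < a - c + d := by
      apply lt_of_pow_lt_pow_left₀ 2 (by linarith)
      nlinarith
    exact_mod_cast this
  have hx : 2 * ((a : ℝ) - c) * x = (a - c) ^ 2 + d ^ 2 - b ^ 2 := by linarith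
  obtain ⟨e, he⟩ := Int.eq_ofNat_of_zero_le (by omega : 0 ≤ a - c)
  obtain ⟨s, hs⟩ := Int.eq_ofNat_of_zero_le (by omega : 0 ≤ a + c)
  obtain ⟨q, hq⟩ := Int.eq_ofNat_of_zero_le (by omega : 0 ≤ b - d)
  obtain ⟨u, hu'⟩ := Int.eq_ofNat_of_zero_le (by omega : 0 ≤ b + d - (a - c))
  obtain ⟨v, hv'⟩ := Int.eq_ofNat_of_zero_le (by omega : 0 ≤ a - c - (b - d))
  have hE : (16 * (a - c) ^ 2 * (a + c + (b + d)) ^ 2 : ℝ) =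
      (a + c) ^ 2 * (((b + d) ^ 2 - (a - c) ^ 2) * ((a - c) ^ 2 - (b - d) ^ 2)) := by
    have i1 : (16 * (a - c) ^ 2 * (a + c + (b + d)) ^ 2 : ℝ) =
        4 * (a - c) ^ 2 * (((a : ℝ) + c) * h) ^ 2 := by rw [h3]; ring
    have i2 : 4 * ((a : ℝ) - c) ^ 2 * h ^ 2 = 4 * (a - c) ^ 2 * d ^ 2 - (2 * (a - c) * x) ^ 2 := by
      linear_combination 4 * ((a : ℝ) - c) ^ 2 * h1
    rw [hx] at i2
    rw [i1]
    linear_combination ((a : ℝ) + c) ^ 2 * i2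
  have hEz : (16 * (a - c) ^ 2 * (a + c + (b + d)) ^ 2 : ℤ) =
      (a + c) ^ 2 * (((b + d) ^ 2 - (a - c) ^ 2) * ((a - c) ^ 2 - (b - d) ^ 2)) := by
    exact_mod_cast hE
  have key := trap_core e q u v s (by omega) (by omega) (by omega) (by omega) (by omega) (by omega)
    (by
      have k1 : b + d = (e : ℤ) + u := by omega
      have k2 : (e : ℤ) = q + v := by omega
      rw [he, hs, hq, k1] at hEz
      have : (16 * (e : ℤ) ^ 2 * (s + (e + u)) ^ 2) =
          s ^ 2 * (u * v * (2 * e + u) * (2 * q + v)) := by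
        rw [hEz]
        simp only [k2]
        ring
      exact_mod_cast this)
  simp only [List.mem_cons, Prod.mk.injEq, List.not_mem_nil, or_false] at key
  have hhs : (h : ℝ) * (a + c) = 2 * (a + b + c + d) := by linarith
  rcases key with ⟨k1, k2, k3, k4⟩ | ⟨k1, k2, k3, k4⟩ | ⟨k1, k2, k3, k4⟩ | ⟨k1, k2, k3, k4⟩ |
    ⟨k1, k2, k3, k4⟩
  · obtain rfl : a = 6 := by omega
    obtain rfl : c = 3 := by omega
    obtain rfl : b = 5 := by omega
    obtain rfl : d = 4 := by omega
    push_cast at *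
    obtain rfl : h = 4 := by linarith
    obtain rfl : x = 0 := by linarith
    refine ⟨_, isom_mk (-1) 0 (-1) 6 0 (by norm_num) (by norm_num), Or.inl ?_⟩
    rw [image_four]
    norm_num
    ext p
    simp only [Set.mem_insert_iff, Set.mem_singleton_iff]
    tauto
  · obtain rfl : a = 10 := by omega
    obtain rfl : c = 6 := by omega
    obtain rfl : b = 5 := by omega
    obtain rfl : d = 3 := by omega
    push_cast at *
    obtain rfl : h = 3 := by linarith
    obtain rfl : x = 0 := by linarith
    refine ⟨_, isom_mk (-1) 0 (-1) 10 0 (by norm_num) (by norm_num), Or.inr (Or.inl ?_)⟩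
    rw [image_four]
    norm_num
    ext p
    simp only [Set.mem_insert_iff, Set.mem_singleton_iff]
    tauto
  · obtain rfl : a = 20 := by omega
    obtain rfl : c = 15 := by omega
    obtain rfl : b = 4 := by omega
    obtain rfl : d = 3 := by omega
    push_cast at *
    obtain rfl : h = 12 / 5 := by linarith
    obtain rfl : x = 9 / 5 := by linarith
    refine ⟨_, isom_mk (4 / 5) (3 / 5) 1 0 0 (by norm_num) (by norm_num),
      Or.inr (Or.inr (Or.inr (Or.inr ?_)))⟩
    rw [image_four]
    norm_num
  · obtain rfl : a = 8 := by omega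
    obtain rfl : c = 2 := by omega
    obtain rfl : b = 5 := by omega
    obtain rfl : d = 5 := by omega
    push_cast at *
    obtain rfl : h = 4 := by linarith
    obtain rfl : x = 3 := by linarith
    refine ⟨_, isom_mk 1 0 1 0 0 (by norm_num) (by norm_num),
      Or.inr (Or.inr (Or.inl ?_))⟩
    rw [image_four]
    norm_num
  · obtain rfl : a = 14 := by omega
    obtain rfl : c = 6 := by omega
    obtain rfl : b = 5 := by omega
    obtain rfl : d = 5 := by omega
    push_cast at *
    obtain rfl : h = 3 := by linarith
    obtain rfl : x = 4 := by linarith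
    refine ⟨_, isom_mk 1 0 1 0 0 (by norm_num) (by norm_num),
      Or.inr (Or.inr (Or.inr (Or.inl ?_)))⟩
    rw [image_four]
    norm_num

theorem normal_case (a b c d : ℤ) (x h : ℝ) (hc : 0 < c) (hac : c < a) (hd : 0 ≤ d) (hb : 0 ≤ b)
    (hh : 0 < h) (h1 : x ^ 2 + h ^ 2 = (d : ℝ) ^ 2) (h2 : (a - c - x) ^ 2 + h ^ 2 = (b : ℝ) ^ 2)
    (h3 : ((a : ℝ) + c) * h = 2 * (a + b + c + d)) :
    GoodSet {(0, 0), ((a : ℝ), 0), (x + c, h), (x, h)} := by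
  rcases le_total d b with hdb | hdb
  · exact normal_le a b c d x h hc hac hd hdb hh h1 h2 h3
  · have := normal_le a d c b (a - c - x) h hc hac hb hdb hh h2 (by rw [← h1]; ring)
      (by rw [h3]; ring)
    refine GoodSet.of_image (isom_mk (-1) 0 (-1) a 0 (by norm_num) (by norm_num)) ?_
    convert this using 1
    rw [image_four]
    norm_num
    have e1 : -(c : ℝ) + -x + (a : ℝ) = a - c - x := by ring
    have e2 : -x + (a : ℝ) = a - c - x + c := by ring
    rw [e1, e2]
    ext p
    simp only [Set.mem_insert_iff, Set.mem_singleton_iff]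
    tauto

theorem dist2_sq (p q : ℝ × ℝ) : dist2 p q ^ 2 = (p.1 - q.1) ^ 2 + (p.2 - q.2) ^ 2 :=
  Real.sq_sqrt (by positivity)

theorem dist2_nonneg (p q : ℝ × ℝ) : 0 ≤ dist2 p q := Real.sqrt_nonneg _

theorem sq_sum_zero (x y : ℝ) (h : x ^ 2 + y ^ 2 ≤ 0) : x = 0 ∧ y = 0 := by
  have h1 := sq_nonneg x
  have h2 := sq_nonneg y
  exact ⟨pow_eq_zero_iff (two_ne_zero) |>.mp (by linarith),
    pow_eq_zero_iff (two_ne_zero) |>.mp (by linarith)⟩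

/-- `CB = l · OA` with `0 < l < 1`. -/
theorem scaled_case (O A B C : ℝ × ℝ) (a b c d : ℤ) (l : ℝ) (hl : 0 < l) (hl1 : l < 1)
    (hx : B.1 - C.1 = l * (A.1 - O.1)) (hy : B.2 - C.2 = l * (A.2 - O.2))
    (ha : dist2 O A = a) (hb : dist2 A B = b) (hc : dist2 B C = c) (hd : dist2 C O = d)
    (hsh : 0 < shoelace O A B C) (hAP : shoelace O A B C = 2 * (a + b + c + d)) :
    GoodSet {O, A, B, C} := by
  have ha0 : (0 : ℝ) ≤ a := ha ▸ dist2_nonneg _ _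
  have hb0 : (0 : ℝ) ≤ b := hb ▸ dist2_nonneg _ _
  have hc0 : (0 : ℝ) ≤ c := hc ▸ dist2_nonneg _ _
  have hd0 : (0 : ℝ) ≤ d := hd ▸ dist2_nonneg _ _
  have ha2 := dist2_sq O A
  have hb2 := dist2_sq A B
  have hc2 := dist2_sq B C
  have hd2 := dist2_sq C O
  rw [ha] at ha2
  rw [hb] at hb2
  rw [hc] at hc2
  rw [hd] at hd2
  obtain ⟨o1, o2⟩ := O
  obtain ⟨a1, a2⟩ := A
  obtain ⟨b1, b2⟩ := B
  obtain ⟨c1, c2⟩ := C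
  simp only at *
  obtain rfl : b1 = c1 + l * (a1 - o1) := by linarith
  obtain rfl : b2 = c2 + l * (a2 - o2) := by linarith
  have hsl : shoelace (o1, o2) (a1, a2) (c1 + l * (a1 - o1), c2 + l * (a2 - o2)) (c1, c2) =
      (1 + l) * ((a1 - o1) * (c2 - o2) - (a2 - o2) * (c1 - o1)) := by
    simp only [shoelace]; ring
  have hane : (a : ℝ) ≠ 0 := by
    intro h
    rw [h] at ha2
    obtain ⟨z1, z2⟩ := sq_sum_zero (a1 - o1) (a2 - o2) (by linarith)
    rw [hsl, z1, z2] at hsh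
    simp at hsh
  have hapos : (0 : ℝ) < a := lt_of_le_of_ne ha0 (Ne.symm hane)
  have hcl : (c : ℝ) = l * a := by
    have : (c : ℝ) ^ 2 = (l * a) ^ 2 := by rw [hc2, mul_pow, ha2]; ring
    exact (pow_left_inj₀ hc0 (by positivity) (by norm_num)).mp this
  have hcpos : (0 : ℝ) < c := by rw [hcl]; positivity
  have hca : (c : ℝ) < a := by rw [hcl]; nlinarith
  obtain ⟨w1, hw1⟩ : ∃ w1, w1 = (a1 - o1) / (a : ℝ) := ⟨_, rfl⟩
  obtain ⟨w2, hw2⟩ : ∃ w2, w2 = (a2 - o2) / (a : ℝ) := ⟨_, rfl⟩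
  have hw1' : a1 = o1 + a * w1 := by rw [hw1]; field_simp; ring
  have hw2' : a2 = o2 + a * w2 := by rw [hw2]; field_simp; ring
  have hw : w1 ^ 2 + w2 ^ 2 = 1 := by
    have : (a : ℝ) ^ 2 * (w1 ^ 2 + w2 ^ 2) = a ^ 2 * 1 := by
      rw [mul_one]
      nth_rewrite 2 [ha2]
      rw [hw1', hw2']; ring
    exact mul_left_cancel₀ (by positivity) this
  clear hw1 hw2
  subst hw1' hw2'
  obtain ⟨x, hxd⟩ : ∃ x, x = w1 * (c1 - o1) + w2 * (c2 - o2) := ⟨_, rfl⟩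
  obtain ⟨h, hhd⟩ : ∃ h, h = w1 * (c2 - o2) - w2 * (c1 - o1) := ⟨_, rfl⟩
  have hc1 : c1 = o1 + x * w1 - h * w2 := by
    rw [hxd, hhd]; linear_combination -(c1 - o1) * hw
  have hc2' : c2 = o2 + x * w2 + h * w1 := by
    rw [hxd, hhd]; linear_combination -(c2 - o2) * hw
  clear hxd hhd
  subst hc1 hc2'
  have hsl2 : shoelace (o1, o2) (o1 + a * w1, o2 + a * w2)
      (o1 + x * w1 - h * w2 + l * (o1 + a * w1 - o1), o2 + x * w2 + h * w1 + l * (o2 + a * w2 - o2))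
      (o1 + x * w1 - h * w2, o2 + x * w2 + h * w1) = (a + c) * h := by
    rw [hsl, hcl]
    linear_combination (1 + l) * a * h * hw
  rw [hsl2] at hsh hAP
  have hh : 0 < h := by
    by_contra hn
    nlinarith
  have := normal_case a b c d x h (by exact_mod_cast hcpos) (by exact_mod_cast hca)
    (by exact_mod_cast hd0) (by exact_mod_cast hb0) hh
    (by rw [hd2]; linear_combination -(x ^ 2 + h ^ 2) * hw)
    (by
      rw [hb2, hcl]; linear_combination -(((a : ℝ) - l * a - x) ^ 2 + h ^ 2) * hw)
    hAP
  refine GoodSet.of_image (isom_mk w1 (-w2) 1 (-(w1 * o1 + w2 * o2)) (w2 * o1 - w1 * o2)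
    (by rw [← hw]; ring) (by norm_num)) ?_
  convert this using 1
  rw [image_four, hcl]
  congr 1
  · simp only [Prod.mk.injEq]
    constructor <;> ring
  congr 1
  · simp only [Prod.mk.injEq]
    constructor
    · linear_combination (a : ℝ) * hw
    · ring
  congr 1
  · simp only [Prod.mk.injEq]
    constructor
    · linear_combination (x + l * a) * hw
    · linear_combination h * hw
  congr 1
  simp only [Prod.mk.injEq]
  constructor
  · linear_combination x * hw
  · linear_combination h * hw

theorem rot_set (O A B C : ℝ × ℝ) : ({A, B, C, O} : Set (ℝ × ℝ)) = {O, A, B, C} := by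
  ext p
  simp only [Set.mem_insert_iff, Set.mem_singleton_iff]
  tauto

theorem shoelace_rot (O A B C : ℝ × ℝ) : shoelace A B C O = shoelace O A B C := by
  simp only [shoelace]; ring

theorem para_case (O A B C : ℝ × ℝ) (a b c d : ℤ) (hne : ¬ Collinear3 O A B)
    (hseg : Seg A B ∩ Seg C O = ∅) (hp : Para O A B C) (hnp : ¬ Para A B C O)
    (ha : dist2 O A = a) (hb : dist2 A B = b) (hc : dist2 B C = c) (hd : dist2 C O = d)
    (hsh : 0 < shoelace O A B C) (hAP : shoelace O A B C = 2 * (a + b + c + d)) :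
    GoodSet {O, A, B, C} := by
  have hL : 0 < (A.1 - O.1) ^ 2 + (A.2 - O.2) ^ 2 := by
    by_contra hn
    obtain ⟨z1, z2⟩ := sq_sum_zero (A.1 - O.1) (A.2 - O.2) (by linarith)
    apply hne
    simp [Collinear3, cross, z1, z2]
  obtain ⟨l, hl⟩ : ∃ l, l = ((B.1 - C.1) * (A.1 - O.1) + (B.2 - C.2) * (A.2 - O.2)) /
    ((A.1 - O.1) ^ 2 + (A.2 - O.2) ^ 2) := ⟨_, rfl⟩
  rw [eq_div_iff hL.ne'] at hl
  simp only [Para] at hp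
  have hx : B.1 - C.1 = l * (A.1 - O.1) := by
    apply mul_left_cancel₀ hL.ne'
    linear_combination (-(A.1 - O.1)) * hl + (A.2 - O.2) * hp
  have hy : B.2 - C.2 = l * (A.2 - O.2) := by
    apply mul_left_cancel₀ hL.ne'
    linear_combination (-(A.2 - O.2)) * hl - (A.1 - O.1) * hp
  have hl1 : l ≠ 1 := by
    rintro rfl
    apply hnp
    simp only [Para]
    linear_combination (B.1 - A.1) * hy - (B.2 - A.2) * hx
  have hl0 : 0 < l := by
    by_contra hn
    have hn : l ≤ 0 := not_lt.mp hn
    have hpos : 0 < 1 - l := by linarith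
    have hmem : (1 - 1 / (1 - l)) • A + (1 / (1 - l)) • B ∈ Seg A B ∩ Seg C O := by
      refine ⟨⟨1 / (1 - l), by positivity, ?_, rfl⟩, ⟨-l / (1 - l), ?_, ?_, ?_⟩⟩
      · rw [div_le_one hpos]; linarith
      · apply div_nonneg <;> linarith
      · rw [div_le_one hpos]; linarith
      · have hB1 : B.1 = C.1 + l * (A.1 - O.1) := by linarith
        have hB2 : B.2 = C.2 + l * (A.2 - O.2) := by linarith
        ext
        · simp only [Prod.fst_add, Prod.smul_fst, smul_eq_mul, hB1]
          field_simp
          ring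
        · simp only [Prod.snd_add, Prod.smul_snd, smul_eq_mul, hB2]
          field_simp
          ring
    rw [hseg] at hmem
    exact hmem
  rcases lt_or_gt_of_ne hl1 with h | h
  · exact scaled_case O A B C a b c d l hl0 h hx hy ha hb hc hd hsh hAP
  · have e1 : shoelace B C O A = shoelace O A B C := by
      rw [shoelace_rot, shoelace_rot]
    have := scaled_case B C O A c d a b l⁻¹ (by positivity) (inv_lt_one_of_one_lt₀ h)
      (by field_simp; linarith) (by field_simp; linarith) hc hd ha hb (by rw [e1]; exact hsh)
      (by rw [e1, hAP]; ring)
    rwa [rot_set, rot_set] at this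

/-- up to isometries of the plane, there are exactly five equable
trapezoids with integer side lengths. -/
theorem equable_integer_trapezoids (O A B C : ℝ × ℝ)
    (hquad : IsQuad O A B C)
    (htrap : (Para O A B C ∧ ¬ Para A B C O) ∨ (¬ Para O A B C ∧ Para A B C O))
    (hsides : ∃ a b c d : ℤ,
      dist2 O A = (a : ℝ) ∧ dist2 A B = (b : ℝ) ∧ dist2 B C = (c : ℝ) ∧ dist2 C O = (d : ℝ))
    (hequable : quadArea O A B C = quadPerim O A B C) :
    ∃ φ : ℝ × ℝ → ℝ × ℝ, IsIsometry2 φ ∧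
      (φ '' {O, A, B, C} =
         ({((0 : ℝ), (0 : ℝ)), ((6 : ℝ), (0 : ℝ)), ((6 : ℝ), (4 : ℝ)), ((3 : ℝ), (4 : ℝ))} :
           Set (ℝ × ℝ)) ∨
       φ '' {O, A, B, C} =
         ({((0 : ℝ), (0 : ℝ)), ((10 : ℝ), (0 : ℝ)), ((10 : ℝ), (3 : ℝ)), ((4 : ℝ), (3 : ℝ))} :
           Set (ℝ × ℝ)) ∨
       φ '' {O, A, B, C} =
         ({((0 : ℝ), (0 : ℝ)), ((8 : ℝ), (0 : ℝ)), ((5 : ℝ), (4 : ℝ)), ((3 : ℝ), (4 : ℝ))} :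
           Set (ℝ × ℝ)) ∨
       φ '' {O, A, B, C} =
         ({((0 : ℝ), (0 : ℝ)), ((14 : ℝ), (0 : ℝ)), ((10 : ℝ), (3 : ℝ)), ((4 : ℝ), (3 : ℝ))} :
           Set (ℝ × ℝ)) ∨
       φ '' {O, A, B, C} =
         ({((0 : ℝ), (0 : ℝ)), ((16 : ℝ), (12 : ℝ)), ((12 : ℝ), (12 : ℝ)), ((0 : ℝ), (3 : ℝ))} :
           Set (ℝ × ℝ))) := by
  obtain ⟨⟨hc1, hc2, hc3, hc4, hs1, hs2, -⟩, hsh⟩ := hquad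
  obtain ⟨a, b, c, d, ha, hb, hc, hd⟩ := hsides
  have hAP : shoelace O A B C = 2 * (a + b + c + d) := by
    rw [quadArea, quadPerim, abs_of_pos hsh, ha, hb, hc, hd] at hequable
    linarith
  change GoodSet {O, A, B, C}
  rcases htrap with ⟨hp, hnp⟩ | ⟨hnp, hp⟩
  · exact para_case O A B C a b c d hc1 hs2 hp hnp ha hb hc hd hsh hAP
  · have := para_case A B C O b c d a hc2 (by rw [Set.inter_comm]; exact hs1) hp
      (fun h => hnp (by simp only [Para] at h ⊢; linarith)) hb hc hd ha
      (by rw [shoelace_rot]; exact hsh) (by rw [shoelace_rot, hAP]; ring)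
    rwa [rot_set] at this
end

section
/- Let OABC be a lattice equable quadrilateral and suppose the diagonal OB is interior to the quadrilateral (equivalently, A and C lie strictly on opposite sides of the line OB). If the length |OB| is rational, then OABC is congruent, via an isometry of ℝ², to the right trapezoid with vertices (0,0), (6,0), (6,4), (3,4) (side lengths 6,4,3,5), with the rational diagonal having length 5. In particular, with this single exception, every interior diagonal of a lattice equable quadrilateral has irrational length. -/
/-- If a sum of four square roots of natural numbers is rational, the first one is rational. -/
theorem sqrt_rat_aux (n : Fin 4 → ℕ) (r : ℚ)
    (h : √(n 0 : ℝ) + √(n 1 : ℝ) + √(n 2 : ℝ) + √(n 3 : ℝ) = (r : ℝ)) :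
    ∃ k : ℕ, √(n 0 : ℝ) = k := by
  by_contra hirr
  have hint : ∀ i, IsIntegral ℚ (√(n i : ℝ)) := by
    intro i
    refine IsIntegral.of_pow (n := 2) (by norm_num) ?_
    rw [Real.sq_sqrt (by positivity)]
    exact isIntegral_algebraMap (R := ℚ) (A := ℝ) (x := (n i : ℚ)) |> (by simpa using ·)
  let K := algebraicClosure ℚ ℝ
  let s : Fin 4 → K := fun i => ⟨√(n i : ℝ), (mem_algebraicClosure_iff.2 (hint i).isAlgebraic)⟩
  have hs2 : ∀ i, s i ^ 2 = (n i : K) := by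
    intro i
    apply Subtype.ext
    simp [s]
  have hsum : s 0 + s 1 + s 2 + s 3 = algebraMap ℚ K r := by
    apply Subtype.ext
    simpa [s] using h
  have hnr : ¬ ∃ q : ℚ, √(n 0 : ℝ) = q := by
    rintro ⟨q, hq⟩
    apply hirr
    have h1 : ((q : ℝ)) ^ 2 = n 0 := by rw [← hq]; exact Real.sq_sqrt (by positivity)
    have h2 : q ^ 2 = ((n 0 : ℤ) : ℚ) := by exact_mod_cast h1
    have h3 : q.isInt = true := by
      have : IsIntegral ℤ q := by
        refine IsIntegral.of_pow (n := 2) (by norm_num) ?_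
        rw [h2]
        exact isIntegral_algebraMap (R := ℤ) (A := ℚ)
      obtain ⟨z, hz⟩ := IsIntegrallyClosed.isIntegral_iff.1 this
      rw [← hz]; simp [Rat.isInt]
    have h4 := Rat.eq_num_of_isInt h3
    have h5 : (0 : ℚ) ≤ q := by
      have : (0 : ℝ) ≤ q := by rw [← hq]; positivity
      exact_mod_cast this
    refine ⟨q.num.toNat, ?_⟩
    rw [hq]
    have h6 : ((q.num.toNat : ℤ)) = q.num := Int.toNat_of_nonneg (Rat.num_nonneg.2 h5)
    have h7 : ((q.num.toNat : ℕ) : ℚ) = q := by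
      rw [h4]; exact_mod_cast h6
    exact_mod_cast h7.symm
  -- the minimal polynomial
  have hmin : minpoly ℚ (s 0) = Polynomial.X ^ 2 - Polynomial.C (n 0 : ℚ) := by
    symm
    refine minpoly.eq_of_irreducible_of_monic ?_ ?_ (Polynomial.monic_X_pow_sub_C _ (by norm_num))
    · rw [Polynomial.irreducible_iff_roots_eq_zero_of_degree_le_three]
      · rw [Multiset.eq_zero_iff_forall_notMem]
        intro q hq
        have hq2 := (Polynomial.mem_roots'.1 hq).2
        simp [Polynomial.IsRoot] at hq2
        apply hnr
        refine ⟨|q|, ?_⟩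
        have : (n 0 : ℝ) = (q : ℝ) ^ 2 := by
          have : (n 0 : ℚ) = q ^ 2 := by linarith
          exact_mod_cast this
        rw [this, Real.sqrt_sq_eq_abs]; simp
      · rw [Polynomial.natDegree_X_pow_sub_C]
      · rw [Polynomial.natDegree_X_pow_sub_C]; norm_num
    · simp [hs2]
  have : Algebra.IsAlgebraic ℚ K := algebraicClosure.isAlgebraic ℚ ℝ
  have hex : ∃ φ : K →ₐ[ℚ] ℂ, φ (s 0) = -(√(n 0 : ℝ) : ℂ) := by
    apply IntermediateField.exists_algHom_of_splits_of_aeval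
    · intro x
      exact ⟨Algebra.IsIntegral.isIntegral x, IsAlgClosed.splits _⟩
    · rw [hmin]
      simp
      rw [← Complex.ofReal_pow, Real.sq_sqrt (by positivity)]
      simp
  obtain ⟨φ, hφ⟩ := hex
  have hle : ∀ i, (φ (s i)).re ≤ √(n i : ℝ) := by
    intro i
    have h1 : (φ (s i)) ^ 2 = ((√(n i : ℝ) : ℝ) : ℂ) ^ 2 := by
      rw [← map_pow, hs2, ← Complex.ofReal_pow, Real.sq_sqrt (by positivity)]
      simp
    rcases sq_eq_sq_iff_eq_or_eq_neg.1 h1 with h2 | h2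
    · rw [h2]; simp
    · rw [h2]; simp
  have h1 := congrArg (fun z => (φ z).re) hsum
  simp only [map_add, Complex.add_re, AlgHom.commutes] at h1
  have h0 : (φ (s 0)).re = - √(n 0 : ℝ) := by rw [hφ]; simp
  have h2 : ((algebraMap ℚ ℂ) r).re = r := by simp
  rw [h2, ← h] at h1
  have hpos : 0 < √(n 0 : ℝ) := by
    rcases (Real.sqrt_nonneg (n 0 : ℝ)).lt_or_eq with h | h
    · exact h
    · exact absurd ⟨0, by rw [← h]; simp⟩ hirr
  linarith [hle 1, hle 2, hle 3]

theorem heron_first (d u v w T : ℤ) (hu : 0 < u) (hv : 0 < v) (hw : 0 < w) (hT : 0 < T)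
    (hd : u + v = d) (h : T ^ 2 = (d + w) * u * v * w) (hle : T ≤ d + 2 * w) (hd5 : 5 ≤ d) :
    d = 5 ∧ ((u = 1 ∧ w = 4 ∧ T = 12) ∨ (u = 4 ∧ w = 4 ∧ T = 12) ∨
      (u = 2 ∧ w = 1 ∧ T = 6) ∨ (u = 3 ∧ w = 1 ∧ T = 6)) := by
  have hkey : w * (d + w) * (u * v - 4) ≤ d ^ 2 := by nlinarith
  have hd8 : d ≤ 8 := by
    by_contra! hcon
    by_cases hc : u = 1 ∨ v = 1
    · have huv : u * v = d - 1 := by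
        rcases hc with rfl | rfl
        · linarith
        · linarith
      rw [huv] at hkey
      rcases (by omega : w = 1 ∨ 2 ≤ w) with rfl | hw2
      · have h3 : T ^ 2 = d ^ 2 - 1 := by rw [h]; linear_combination (d + 1) * huv
        have : d - 1 < T := by nlinarith
        have : T < d := by nlinarith
        omega
      · have h3 : 2 * (d + 2) ≤ w * (d + w) := by nlinarith
        nlinarith
    · have h2 : 2 ≤ u ∧ 2 ≤ v := by omega
      have huv : 2 * d - 4 ≤ u * v := by nlinarith [mul_nonneg (sub_nonneg.2 h2.1) (sub_nonneg.2 h2.2)]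
      have h3 : d + 1 ≤ w * (d + w) := by nlinarith
      nlinarith
  have hv' : v = d - u := by omega
  subst hv'
  have hu8 : u < d := by omega
  by_cases h4 : u * (d - u) ≤ 4
  · have : d = 5 ∧ (u = 1 ∨ u = 4) := by
      have : u ≤ 7 := by omega
      interval_cases d <;> interval_cases u <;> simp_all
    obtain ⟨rfl, hu⟩ := this
    have hT2 : T ^ 2 = 4 * w ^ 2 + 20 * w := by
      rcases hu with rfl | rfl <;> rw [h] <;> ring
    have hw4 : w ≤ 4 := by
      by_contra! hcon
      have : T < 2 * w + 5 := by nlinarith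
      have : 2 * w + 4 < T := by nlinarith
      omega
    refine ⟨rfl, ?_⟩
    have hT13 : T ≤ 13 := by omega
    clear h hkey h4
    interval_cases w <;> interval_cases T <;> omega
  · have hwd : w < d := by
      push Not at h4
      have : w * (d + w) ≤ d ^ 2 := by
        have : 0 < w * (d + w) := by nlinarith
        nlinarith
      nlinarith
    have hw8 : w ≤ 7 := by omega
    have hT22 : T ≤ 22 := by omega
    have hu7 : u ≤ 7 := by omega
    clear hle
    interval_cases d <;> interval_cases u <;> first
      | omega
      | (interval_cases w <;> first
          | omega
          | (interval_cases T <;> omega))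

theorem heron_pair (d u v w T u' v' w' T' : ℤ) (hu : 0 < u) (hv : 0 < v) (hw : 0 < w) (hT : 0 < T)
    (hd : u + v = d) (h : T ^ 2 = (d + w) * u * v * w) (hle : T ≤ d + 2 * w)
    (hu' : 0 < u') (hv' : 0 < v') (hw' : 0 < w') (hT' : 0 < T')
    (hd' : u' + v' = d) (h' : T' ^ 2 = (d + w') * u' * v' * w')
    (hsum : T + T' = 2 * d + 2 * w + 2 * w') :
    d = 5 ∧ ((u = 1 ∧ w = 4 ∧ T = 12) ∨ (u = 4 ∧ w = 4 ∧ T = 12) ∨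
      (u = 2 ∧ w = 1 ∧ T = 6) ∨ (u = 3 ∧ w = 1 ∧ T = 6)) ∧
      (u' = 2 ∨ u' = 3) ∧ w' = 3 ∧ T' = 12 := by
  have small : ∀ u v w T : ℤ, 0 < w → 0 < d → u * v ≤ 4 →
      T ^ 2 = (d + w) * u * v * w → T < d + 2 * w := by
    intro u v w T hw hd huv h
    have h1 : 0 < (d + w) * w := by positivity
    have h2 : T ^ 2 ≤ 4 * ((d + w) * w) := by nlinarith
    nlinarith
  have hd5 : 5 ≤ d := by
    by_contra! hcon
    have p1 : u * v ≤ 4 := by nlinarith [sq_nonneg (u - v)]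
    have p2 : u' * v' ≤ 4 := by nlinarith [sq_nonneg (u' - v')]
    have := small u v w T hw (by omega) p1 h
    have := small u' v' w' T' hw' (by omega) p2 h'
    omega
  obtain ⟨rfl, hfirst⟩ := heron_first d u v w T hu hv hw hT hd h hle hd5
  refine ⟨rfl, hfirst, ?_⟩
  have hTT : T' = 6 + 2 * w' := by omega
  have hv2 : v' = 5 - u' := by omega
  by_cases h4 : u' * v' ≤ 4
  · have := small u' v' w' T' hw' (by omega) h4 h'
    omega
  · have hu23 : u' = 2 ∨ u' = 3 := by
      subst hv2
      have : u' < 5 := by omega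
      interval_cases u' <;> simp_all
    have h6 : (w' - 3) * (w' + 6) = 0 := by
      subst hTT
      subst hv2
      rcases hu23 with rfl | rfl <;> linarith
    have : w' = 3 := by
      rcases mul_eq_zero.1 h6 with h | h <;> omega
    exact ⟨hu23, this, by omega⟩

/-- Heron parameters of a lattice triangle with integer sides. -/
theorem heron_params (p q x y d a b m : ℤ) (hd : 0 ≤ d) (ha : 0 ≤ a) (hb : 0 ≤ b) (hm : 0 < m)
    (h1 : p ^ 2 + q ^ 2 = d ^ 2) (h2 : x ^ 2 + y ^ 2 = a ^ 2)
    (h3 : (x - p) ^ 2 + (y - q) ^ 2 = b ^ 2) (h4 : (p * y - q * x) ^ 2 = m ^ 2) :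
    ∃ u v w T : ℤ, 0 < u ∧ 0 < v ∧ 0 < w ∧ 0 < T ∧ u + v = d ∧ a = v + w ∧ b = u + w ∧
      m = 2 * T ∧ T ^ 2 = (d + w) * u * v * w := by
  have hpar : (2 : ℤ) ∣ a + b + d := by
    have e : ∀ z : ℤ, (2 : ℤ) ∣ z ^ 2 - z := by
      intro z
      have := Int.even_mul_succ_self (z - 1)
      obtain ⟨k, hk⟩ := this
      exact ⟨k, by linarith⟩
    have := e a
    have := e b
    have := e d
    have : (2 : ℤ) ∣ a ^ 2 + b ^ 2 + d ^ 2 := by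
      rw [← h1, ← h2, ← h3]
      exact ⟨x ^ 2 + y ^ 2 + p ^ 2 + q ^ 2 - x * p - y * q, by ring⟩
    omega
  obtain ⟨s, hs⟩ := hpar
  have hher : 4 * m ^ 2 = (a + b + d) * (a + b - d) * (a - b + d) * (-a + b + d) := by
    have e : (a + b + d) * (a + b - d) * (a - b + d) * (-a + b + d) =
        4 * a ^ 2 * d ^ 2 - (a ^ 2 + d ^ 2 - b ^ 2) ^ 2 := by ring
    rw [e, ← h4, ← h1, ← h2, ← h3]; ring
  have hb' : b = 2 * s - a - d := by omega
  have hm2 : m ^ 2 = 4 * (s * (s - d) * (s - a) * (s - b)) := by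
    subst hb'
    linarith
  have hev : (2 : ℤ) ∣ m := by
    have : (2 : ℤ) ∣ m ^ 2 := ⟨2 * (s * (s - d) * (s - a) * (s - b)), by linarith⟩
    exact Int.prime_two.dvd_of_dvd_pow this
  obtain ⟨T, hT⟩ := hev
  have hT2 : T ^ 2 = s * (s - d) * (s - a) * (s - b) := by
    subst hT; linarith
  have hTpos : 0 < T := by omega
  have hpos : 0 < s * (s - d) * (s - a) * (s - b) := by rw [← hT2]; positivity
  have key : 0 < s - d ∧ 0 < s - a ∧ 0 < s - b := by
    have hs0 : 0 ≤ s := by omega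
    have n1 : s - d ≠ 0 := by intro h; simp [h] at hpos
    have n2 : s - a ≠ 0 := by intro h; simp [h] at hpos
    have n3 : s - b ≠ 0 := by intro h; simp [h] at hpos
    have n4 : s ≠ 0 := by intro h; simp [h] at hpos
    have hs1 : 0 < s := by omega
    have hpos' : 0 < (s - d) * (s - a) * (s - b) := by
      have : 0 < s * ((s - d) * (s - a) * (s - b)) := by linarith
      exact pos_of_mul_pos_right this hs0 |> fun h => h
    by_contra hcon
    have : (s - d < 0 ∧ 0 < s - a ∧ 0 < s - b) ∨ (0 < s - d ∧ s - a < 0 ∧ 0 < s - b) ∨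
      (0 < s - d ∧ 0 < s - a ∧ s - b < 0) := by omega
    rcases this with ⟨i, j, k⟩ | ⟨i, j, k⟩ | ⟨i, j, k⟩
    · nlinarith [mul_neg_of_neg_of_pos (mul_neg_of_neg_of_pos i j) k]
    · nlinarith [mul_neg_of_neg_of_pos (mul_neg_of_pos_of_neg i j) k]
    · nlinarith [mul_neg_of_pos_of_neg (mul_pos i j) k]
  refine ⟨s - a, s - b, s - d, T, key.2.1, key.2.2, key.1, hTpos, by omega, by omega, by omega, hT, ?_⟩
  rw [hT2]; ring

/-- The points `Q0 Q1 Q2 Q3` form a copy of the right trapezoid. -/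
def Trap (Q0 Q1 Q2 Q3 : ℤ × ℤ) : Prop :=
  Q1.1 - Q0.1 = 2 * (Q2.1 - Q3.1) ∧ Q1.2 - Q0.2 = 2 * (Q2.2 - Q3.2) ∧
  (Q2.1 - Q3.1) ^ 2 + (Q2.2 - Q3.2) ^ 2 = 9 ∧ (Q2.1 - Q1.1) ^ 2 + (Q2.2 - Q1.2) ^ 2 = 16 ∧
  (Q2.1 - Q3.1) * (Q2.1 - Q1.1) + (Q2.2 - Q3.2) * (Q2.2 - Q1.2) = 0

theorem int_main (p q x y z t d a b e f m1 m2 : ℤ)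
    (hd : 0 ≤ d) (ha : 0 ≤ a) (hb : 0 ≤ b) (he : 0 ≤ e) (hf : 0 ≤ f) (hm1 : 0 < m1) (hm2 : 0 < m2)
    (h1 : p ^ 2 + q ^ 2 = d ^ 2) (h2 : x ^ 2 + y ^ 2 = a ^ 2)
    (h3 : (x - p) ^ 2 + (y - q) ^ 2 = b ^ 2) (h4 : p * y - q * x = -m1)
    (h5 : z ^ 2 + t ^ 2 = f ^ 2)
    (h6 : (z - p) ^ 2 + (t - q) ^ 2 = e ^ 2) (h7 : p * t - q * z = m2)
    (hsum : m1 + m2 = 2 * (a + b + e + f))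
    (hABC : (p - x) * (t - y) - (q - y) * (z - x) ≠ 0)
    (hCOA : x * t - y * z ≠ 0) :
    d = 5 ∧ (Trap (z, t) (0, 0) (x, y) (p, q) ∨ Trap (x, y) (p, q) (z, t) (0, 0) ∨
      Trap (x, y) (0, 0) (z, t) (p, q) ∨ Trap (z, t) (p, q) (x, y) (0, 0)) := by
  obtain ⟨u, v, w, T, hu, hv, hw, hT, huv, hav, hbu, hmT, hT2⟩ :=
    heron_params p q x y d a b m1 hd ha hb hm1 h1 h2 h3 (by rw [h4]; ring)
  obtain ⟨u', v', w', T', hu', hv', hw', hT', huv', hav', hbu', hmT', hT2'⟩ :=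
    heron_params p q z t d f e m2 hd hf he hm2 h1 h5 h6 (by rw [h7])
  have hTT : T + T' = 2 * d + 2 * w + 2 * w' := by omega
  have hcases : d = 5 ∧ ∃ A M G N : ℤ, 2 * A = a ^ 2 + 25 - b ^ 2 ∧ M = m1 ∧
      2 * G = f ^ 2 + 25 - e ^ 2 ∧ N = m2 ∧
      ((a = 4 ∧ b = 3 ∧ e = 5 ∧ f = 6 ∧ A = 16 ∧ M = 12 ∧ G = 18 ∧ N = 24) ∨
       (a = 3 ∧ b = 4 ∧ e = 6 ∧ f = 5 ∧ A = 9 ∧ M = 12 ∧ G = 7 ∧ N = 24) ∨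
       (a = 6 ∧ b = 5 ∧ e = 3 ∧ f = 4 ∧ A = 18 ∧ M = 24 ∧ G = 16 ∧ N = 12) ∨
       (a = 5 ∧ b = 6 ∧ e = 4 ∧ f = 3 ∧ A = 7 ∧ M = 24 ∧ G = 9 ∧ N = 12) ∨
       (A * N + M * G = 0) ∨ (A * N + M * G = 25 * (M + N)) ∨ ¬ (25 : ℤ) ∣ A * N + M * G) := by
    rcases le_total T (d + 2 * w) with hle | hle
    · obtain ⟨rfl, hc, hc', rfl, rfl⟩ := heron_pair d u v w T u' v' w' T' hu hv hw hT huv hT2 hle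
        hu' hv' hw' hT' huv' hT2' hTT
      refine ⟨rfl, (a ^ 2 + 25 - b ^ 2) / 2, m1, (f ^ 2 + 25 - e ^ 2) / 2, m2, ?_⟩
      rcases hc' with rfl | rfl <;>
      obtain rfl : v' = _ := eq_sub_of_add_eq' huv' <;>
      rcases hc with ⟨rfl, rfl, rfl⟩ | ⟨rfl, rfl, rfl⟩ | ⟨rfl, rfl, rfl⟩ | ⟨rfl, rfl, rfl⟩ <;>
      obtain rfl : v = _ := eq_sub_of_add_eq' huv <;>
      subst hav hbu hav' hbu' hmT hmT' <;> norm_num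
    · obtain ⟨rfl, hc, hc', rfl, rfl⟩ := heron_pair d u' v' w' T' u v w T
        hu' hv' hw' hT' huv' hT2' (by omega) hu hv hw hT huv hT2 (by omega)
      refine ⟨rfl, (a ^ 2 + 25 - b ^ 2) / 2, m1, (f ^ 2 + 25 - e ^ 2) / 2, m2, ?_⟩
      rcases hc' with rfl | rfl <;>
      obtain rfl : v = _ := eq_sub_of_add_eq' huv <;>
      rcases hc with ⟨rfl, rfl, rfl⟩ | ⟨rfl, rfl, rfl⟩ | ⟨rfl, rfl, rfl⟩ | ⟨rfl, rfl, rfl⟩ <;>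
      obtain rfl : v' = _ := eq_sub_of_add_eq' huv' <;>
      subst hav hbu hav' hbu' hmT hmT' <;> norm_num
  obtain ⟨rfl, A, M, G, N, hA, rfl, hG, rfl, hc⟩ := hcases
  refine ⟨rfl, ?_⟩
  clear hT2 hT2' hTT hmT hmT' hav hav' hbu hbu' huv huv' hu hv hw hT hu' hv' hw' hT'
  have dA : p * x + q * y = A := by linarith
  have dC : p * z + q * t = G := by linarith
  have hX : A * N + M * G = 25 * (x * t - y * z) := by
    rw [← dA, ← dC, ← h7, show M = -(p * y - q * x) by linarith]
    linear_combination (x * t - y * z) * h1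
  have hX2 : (p - x) * (t - y) - (q - y) * (z - x) = M + N - (x * t - y * z) := by
    linarith
  have ex : 25 * x = A * p + M * q := by
    rw [← dA, show M = -(p * y - q * x) by linarith]; linear_combination (-x) * h1
  have ey : 25 * y = A * q - M * p := by
    rw [← dA, show M = -(p * y - q * x) by linarith]; linear_combination (-y) * h1
  have ez : 25 * z = G * p - N * q := by
    rw [← dC, ← h7]; linear_combination (-z) * h1
  have et : 25 * t = G * q + N * p := by
    rw [← dC, ← h7]; linear_combination (-t) * h1
  rcases hc with ⟨rfl, rfl, rfl, rfl, rfl, rfl, rfl, rfl⟩ | ⟨rfl, rfl, rfl, rfl, rfl, rfl, rfl, rfl⟩ |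
    ⟨rfl, rfl, rfl, rfl, rfl, rfl, rfl, rfl⟩ | ⟨rfl, rfl, rfl, rfl, rfl, rfl, rfl, rfl⟩ | h | h | h
  · left
    refine ⟨?_, ?_, ?_, ?_, ?_⟩ <;> simp only <;> linarith
  · right; right; right
    refine ⟨?_, ?_, ?_, ?_, ?_⟩ <;> simp only <;> linarith
  · right; right; left
    refine ⟨?_, ?_, ?_, ?_, ?_⟩ <;> simp only <;> linarith
  · right; left
    refine ⟨?_, ?_, ?_, ?_, ?_⟩ <;> simp only <;> linarith
  · exact absurd (by linarith) hCOA
  · exact absurd (by linarith) hABC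
  · exact absurd ⟨_, hX⟩ h

/-- The isometry. -/
theorem trap_isometry (c0 c1 : ℤ) (Q0 Q1 Q2 Q3 : ℤ × ℤ) (h : Trap Q0 Q1 Q2 Q3) :
    ∃ φ : ℝ × ℝ → ℝ × ℝ, IsIsometry2 φ ∧
      φ (((Q0.1 + c0 : ℤ) : ℝ), ((Q0.2 + c1 : ℤ) : ℝ)) = (0, 0) ∧
      φ (((Q1.1 + c0 : ℤ) : ℝ), ((Q1.2 + c1 : ℤ) : ℝ)) = (6, 0) ∧
      φ (((Q2.1 + c0 : ℤ) : ℝ), ((Q2.2 + c1 : ℤ) : ℝ)) = (6, 4) ∧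
      φ (((Q3.1 + c0 : ℤ) : ℝ), ((Q3.2 + c1 : ℤ) : ℝ)) = (3, 4) := by
  obtain ⟨a0, b0⟩ := Q0
  obtain ⟨a1, b1⟩ := Q1
  obtain ⟨a2, b2⟩ := Q2
  obtain ⟨a3, b3⟩ := Q3
  obtain ⟨h1, h2, h3, h4, h5⟩ := h
  simp only at h1 h2 h3 h4 h5
  obtain ⟨r, hr⟩ : ∃ r : ℝ, r = ((a2 : ℝ) - a3) / 3 := ⟨_, rfl⟩
  obtain ⟨s, hs⟩ : ∃ r : ℝ, r = ((b2 : ℝ) - b3) / 3 := ⟨_, rfl⟩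
  obtain ⟨k, hk⟩ : ∃ r : ℝ, r = ((a2 : ℝ) - a1) / 4 := ⟨_, rfl⟩
  obtain ⟨l, hl⟩ : ∃ r : ℝ, r = ((b2 : ℝ) - b1) / 4 := ⟨_, rfl⟩
  have e1 : (a1 : ℝ) - a0 = 2 * (a2 - a3) := by exact_mod_cast h1
  have e2 : (b1 : ℝ) - b0 = 2 * (b2 - b3) := by exact_mod_cast h2
  have e3 : ((a2 : ℝ) - a3) ^ 2 + (b2 - b3) ^ 2 = 9 := by exact_mod_cast h3
  have e4 : ((a2 : ℝ) - a1) ^ 2 + (b2 - b1) ^ 2 = 16 := by exact_mod_cast h4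
  have e5 : ((a2 : ℝ) - a3) * (a2 - a1) + (b2 - b3) * (b2 - b1) = 0 := by exact_mod_cast h5
  have g1 : r ^ 2 + s ^ 2 = 1 := by rw [hr, hs]; linarith
  have g2 : k ^ 2 + l ^ 2 = 1 := by rw [hk, hl]; linarith
  have g3 : r * k + s * l = 0 := by rw [hr, hs, hk, hl]; linarith
  -- transposed orthogonality
  have gd : (r * l - s * k) ^ 2 = 1 := by
    linear_combination (k ^ 2 + l ^ 2) * g1 + g2 - (r * k + s * l) * g3
  have k' : k = -s * (r * l - s * k) := by linear_combination (-k) * g1 + r * g3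
  have l' : l = r * (r * l - s * k) := by linear_combination (-l) * g1 + s * g3
  have f1 : r ^ 2 + k ^ 2 = 1 := by
    linear_combination g1 + (k - s * (r * l - s * k)) * k' + s ^ 2 * gd
  have f2 : s ^ 2 + l ^ 2 = 1 := by linarith
  have f3 : r * s + k * l = 0 := by
    linear_combination l * k' - s * (r * l - s * k) * l' - s * r * gd
  have A1 : (a2 : ℝ) = a3 + 3 * r := by rw [hr]; ring
  have A2 : (b2 : ℝ) = b3 + 3 * s := by rw [hs]; ring
  have A3 : (a1 : ℝ) = a3 + 3 * r - 4 * k := by rw [hr, hk]; ring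
  have A4 : (b1 : ℝ) = b3 + 3 * s - 4 * l := by rw [hs, hl]; ring
  have A5 : (a0 : ℝ) = a3 - 3 * r - 4 * k := by linarith
  have A6 : (b0 : ℝ) = b3 - 3 * s - 4 * l := by linarith
  refine ⟨fun X => (r * (X.1 - (a0 + c0)) + s * (X.2 - (b0 + c1)),
    k * (X.1 - (a0 + c0)) + l * (X.2 - (b0 + c1))), ⟨⟨?_, ?_⟩, ?_⟩, ?_, ?_, ?_, ?_⟩
  · rintro ⟨x, y⟩ ⟨x', y'⟩ hxy
    simp only [Prod.mk.injEq] at hxy ⊢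
    obtain ⟨p1, p2⟩ := hxy
    constructor
    · linear_combination r * p1 + k * p2 - (x - x') * f1 - (y - y') * f3
    · linear_combination s * p1 + l * p2 - (y - y') * f2 - (x - x') * f3
  · rintro ⟨x, y⟩
    refine ⟨(r * x + k * y + (a0 + c0), s * x + l * y + (b0 + c1)), ?_⟩
    simp only [Prod.mk.injEq]
    constructor
    · linear_combination x * g1 + y * g3
    · linear_combination y * g2 + x * g3
  · rintro ⟨x, y⟩ ⟨x', y'⟩
    simp only [dist2]
    congr 1
    linear_combination (x - x') ^ 2 * f1 + (y - y') ^ 2 * f2 + 2 * (x - x') * (y - y') * f3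
  · simp
  · simp only [Prod.mk.injEq]; push_cast; rw [A3, A4, A5, A6]
    exact ⟨by linear_combination 6 * g1, by linear_combination 6 * g3⟩
  · simp only [Prod.mk.injEq]; push_cast; rw [A1, A2, A5, A6]
    exact ⟨by linear_combination 6 * g1 + 4 * g3, by linear_combination 6 * g3 + 4 * g2⟩
  · simp only [Prod.mk.injEq]; push_cast; rw [A5, A6]
    exact ⟨by linear_combination 3 * g1 + 4 * g3, by linear_combination 3 * g3 + 4 * g2⟩

theorem dist2_int (a b c e : ℤ) :
    dist2 ((a : ℝ), (b : ℝ)) ((c : ℝ), (e : ℝ)) =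
      √((((a - c) ^ 2 + (b - e) ^ 2).toNat : ℕ) : ℝ) := by
  have h : ((((a - c) ^ 2 + (b - e) ^ 2).toNat : ℕ) : ℤ) = (a - c) ^ 2 + (b - e) ^ 2 :=
    Int.toNat_of_nonneg (by positivity)
  have h' : ((((a - c) ^ 2 + (b - e) ^ 2).toNat : ℕ) : ℝ) = ((a : ℝ) - c) ^ 2 + (b - e) ^ 2 := by
    exact_mod_cast h
  rw [h']; rfl

theorem dist2_sq_int (a b c e : ℤ) (k : ℕ)
    (h : dist2 ((a : ℝ), (b : ℝ)) ((c : ℝ), (e : ℝ)) = k) :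
    (a - c) ^ 2 + (b - e) ^ 2 = (k : ℤ) ^ 2 := by
  have h2 : ((a : ℝ) - c) ^ 2 + (b - e) ^ 2 = (k : ℝ) ^ 2 := by
    rw [← h, dist2, Real.sq_sqrt (by positivity)]
  exact_mod_cast h2

theorem sqrt_rat4 (n0 n1 n2 n3 : ℕ) (r : ℚ)
    (h : √(n0 : ℝ) + √(n1 : ℝ) + √(n2 : ℝ) + √(n3 : ℝ) = (r : ℝ)) :
    ∃ k : ℕ, √(n0 : ℝ) = k :=
  sqrt_rat_aux ![n0, n1, n2, n3] r h

/-- a lattice equable quadrilateral with a rational interior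
diagonal is congruent to the 6,4,3,5 right trapezoid, the diagonal having
length 5. -/
theorem rational_interior_diagonal (O A B C : ℝ × ℝ)
    (hquad : IsQuad O A B C)
    (hlat : IsLatticePt O ∧ IsLatticePt A ∧ IsLatticePt B ∧ IsLatticePt C)
    (hequable : quadArea O A B C = quadPerim O A B C)
    (hinterior : cross O B A * cross O B C < 0)
    (hrat : ∃ q : ℚ, dist2 O B = (q : ℝ)) :
    dist2 O B = 5 ∧
    ∃ φ : ℝ × ℝ → ℝ × ℝ, IsIsometry2 φ ∧
      φ '' {O, A, B, C} =
        ({((0 : ℝ), (0 : ℝ)), ((6 : ℝ), (0 : ℝ)), ((6 : ℝ), (4 : ℝ)), ((3 : ℝ), (4 : ℝ))} :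
          Set (ℝ × ℝ)) := by
  obtain ⟨⟨o1, o2, rfl⟩, ⟨a1, a2, rfl⟩, ⟨b1, b2, rfl⟩, ⟨c1, c2, rfl⟩⟩ := hlat
  obtain ⟨⟨-, nABC, -, nCOA, -⟩, hsh⟩ := hquad
  have hper : ∃ r : ℚ, dist2 ((o1 : ℝ), (o2 : ℝ)) ((a1 : ℝ), (a2 : ℝ)) +
      dist2 ((a1 : ℝ), (a2 : ℝ)) ((b1 : ℝ), (b2 : ℝ)) +
      dist2 ((b1 : ℝ), (b2 : ℝ)) ((c1 : ℝ), (c2 : ℝ)) +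
      dist2 ((c1 : ℝ), (c2 : ℝ)) ((o1 : ℝ), (o2 : ℝ)) = (r : ℝ) := by
    refine ⟨(((o1 * a2 - a1 * o2) + (a1 * b2 - b1 * a2) +
      (b1 * c2 - c1 * b2) + (c1 * o2 - o1 * c2) : ℤ) : ℚ) / 2, ?_⟩
    have := hequable
    rw [quadArea, abs_of_pos hsh, quadPerim] at this
    rw [← this, shoelace]
    push_cast
    ring
  obtain ⟨r, hr⟩ := hper
  obtain ⟨d, hd⟩ : ∃ k : ℕ, dist2 ((o1 : ℝ), (o2 : ℝ)) ((b1 : ℝ), (b2 : ℝ)) = k := by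
    obtain ⟨q, hq⟩ := hrat
    rw [dist2_int] at hq ⊢
    exact sqrt_rat4 _ 0 0 0 q (by simpa only [Nat.cast_zero, Real.sqrt_zero, add_zero] using hq)
  obtain ⟨a, ha⟩ : ∃ k : ℕ, dist2 ((o1 : ℝ), (o2 : ℝ)) ((a1 : ℝ), (a2 : ℝ)) = k := by
    simp only [dist2_int] at hr ⊢
    exact sqrt_rat4 _ _ _ _ r hr
  obtain ⟨b, hb⟩ : ∃ k : ℕ, dist2 ((a1 : ℝ), (a2 : ℝ)) ((b1 : ℝ), (b2 : ℝ)) = k := by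
    simp only [dist2_int] at hr ⊢
    exact sqrt_rat4 ((a1 - b1) ^ 2 + (a2 - b2) ^ 2).toNat ((o1 - a1) ^ 2 + (o2 - a2) ^ 2).toNat
      ((b1 - c1) ^ 2 + (b2 - c2) ^ 2).toNat ((c1 - o1) ^ 2 + (c2 - o2) ^ 2).toNat r (by rw [← hr]; ring)
  obtain ⟨e, he⟩ : ∃ k : ℕ, dist2 ((b1 : ℝ), (b2 : ℝ)) ((c1 : ℝ), (c2 : ℝ)) = k := by
    simp only [dist2_int] at hr ⊢
    exact sqrt_rat4 ((b1 - c1) ^ 2 + (b2 - c2) ^ 2).toNat ((o1 - a1) ^ 2 + (o2 - a2) ^ 2).toNat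
      ((a1 - b1) ^ 2 + (a2 - b2) ^ 2).toNat ((c1 - o1) ^ 2 + (c2 - o2) ^ 2).toNat r (by rw [← hr]; ring)
  obtain ⟨f, hf⟩ : ∃ k : ℕ, dist2 ((c1 : ℝ), (c2 : ℝ)) ((o1 : ℝ), (o2 : ℝ)) = k := by
    simp only [dist2_int] at hr ⊢
    exact sqrt_rat4 ((c1 - o1) ^ 2 + (c2 - o2) ^ 2).toNat ((o1 - a1) ^ 2 + (o2 - a2) ^ 2).toNat
      ((a1 - b1) ^ 2 + (a2 - b2) ^ 2).toNat ((b1 - c1) ^ 2 + (b2 - c2) ^ 2).toNat r (by rw [← hr]; ring)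
  have hmul : ((b1 - o1) * (a2 - o2) - (b2 - o2) * (a1 - o1)) *
      ((b1 - o1) * (c2 - o2) - (b2 - o2) * (c1 - o1)) < 0 := by
    have h := hinterior
    simp only [cross] at h
    exact_mod_cast h
  have hS : 0 < (o1 * a2 - a1 * o2) + (a1 * b2 - b1 * a2) +
      (b1 * c2 - c1 * b2) + (c1 * o2 - o1 * c2) := by
    have h := hsh
    simp only [shoelace] at h
    exact_mod_cast h
  have hE : (o1 * a2 - a1 * o2) + (a1 * b2 - b1 * a2) +
      (b1 * c2 - c1 * b2) + (c1 * o2 - o1 * c2) = 2 * ((a : ℤ) + b + e + f) := by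
    have h := hequable
    rw [quadArea, abs_of_pos hsh, quadPerim, ha, hb, he, hf, shoelace] at h
    have h' : ((o1 : ℝ) * a2 - a1 * o2) + (a1 * b2 - b1 * a2) +
      (b1 * c2 - c1 * b2) + (c1 * o2 - o1 * c2) = 2 * ((a : ℝ) + b + e + f) := by
      simp only at h
      linarith
    exact_mod_cast h'
  have n1 : ((b1 - a1) * (c2 - a2) - (b2 - a2) * (c1 - a1)) ≠ 0 := by
    intro h
    apply nABC
    simp only [Collinear3, cross]
    exact_mod_cast h
  have n2 : ((o1 - c1) * (a2 - c2) - (o2 - c2) * (a1 - c1)) ≠ 0 := by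
    intro h
    apply nCOA
    simp only [Collinear3, cross]
    exact_mod_cast h
  have sd := dist2_sq_int _ _ _ _ _ hd
  have sa := dist2_sq_int _ _ _ _ _ ha
  have sb := dist2_sq_int _ _ _ _ _ hb
  have se := dist2_sq_int _ _ _ _ _ he
  have sf := dist2_sq_int _ _ _ _ _ hf
  have hsgn : 0 < -((b1 - o1) * (a2 - o2) - (b2 - o2) * (a1 - o1)) ∧
      0 < (b1 - o1) * (c2 - o2) - (b2 - o2) * (c1 - o1) := by
    rcases mul_neg_iff.1 hmul with ⟨i, j⟩ | ⟨i, j⟩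
    · linarith
    · exact ⟨by linarith, j⟩
  obtain ⟨hd5, hT⟩ := int_main (b1 - o1) (b2 - o2) (a1 - o1) (a2 - o2) (c1 - o1) (c2 - o2)
    d a b e f _ _ (by positivity) (by positivity) (by positivity) (by positivity) (by positivity)
    hsgn.1 hsgn.2 (by rw [← sd]; ring) (by rw [← sa]; ring) (by rw [← sb]; ring) (by ring)
    (by rw [← sf]) (by rw [← se]; ring) rfl (by rw [← hE]; ring)
    (by intro h; apply n1; rw [← h]; ring) (by intro h; apply n2; rw [← h]; ring)
  refine ⟨by rw [hd]; exact_mod_cast hd5, ?_⟩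
  rcases hT with hT | hT | hT | hT <;>
  · obtain ⟨φ, hφ, p0, p1, p2, p3⟩ := trap_isometry o1 o2 _ _ _ _ hT
    refine ⟨φ, hφ, ?_⟩
    simp only [sub_add_cancel, zero_add] at p0 p1 p2 p3
    simp only [Set.image_insert_eq, Set.image_singleton, p0, p1, p2, p3]
    ext X
    simp only [Set.mem_insert_iff, Set.mem_singleton_iff]
    tauto
end

section
/- If a triangle has integer side lengths and rational area, then its area is an integer. Equivalently: if x, y, z are positive integers satisfying the strict triangle inequalities, and T is a nonnegative rational number with 16T² = (x+y+z)(−x+y+z)(x−y+z)(x+y−z) (Heron's formula), then T is an integer. -/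
theorem rat_sq_int_aux (q : ℚ) (n : ℤ) (h : q ^ 2 = (n : ℚ)) : ∃ m : ℤ, q = (m : ℚ) := by
  have h1 : (q ^ 2).den = 1 := by rw [h]; rfl
  rw [Rat.den_pow] at h1
  have h2 : q.den = 1 := by
    simpa using h1
  exact ⟨q.num, (Rat.den_eq_one_iff q).mp h2 |>.symm⟩

/-- a triangle with integer sides and rational area has integer
area. -/
theorem heronian_area_integer (x y z : ℤ) (hx : 0 < x) (hy : 0 < y) (hz : 0 < z)
    (hxyz : x < y + z) (hyxz : y < x + z) (hzxy : z < x + y)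
    (T : ℚ) (hT : 0 ≤ T)
    (heron : 16 * T ^ 2 =
      (((x + y + z) * (-x + y + z) * (x - y + z) * (x + y - z) : ℤ) : ℚ)) :
    ∃ m : ℤ, T = (m : ℚ) := by
  rcases Int.even_or_odd' (x + y + z) with ⟨s, hs | hs⟩
  · apply rat_sq_int_aux T (s * (s - x) * (s - y) * (s - z))
    have hz' : z = 2 * s - x - y := by linarith
    subst hz'
    push_cast at heron ⊢
    linear_combination heron / 16
  · exfalso
    obtain ⟨N, hN⟩ := rat_sq_int_aux (4 * T)
      ((x + y + z) * (-x + y + z) * (x - y + z) * (x + y - z)) (by rw [← heron]; ring)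
    have hN2 : N ^ 2 = (x + y + z) * (-x + y + z) * (x - y + z) * (x + y - z) := by
      have : ((N : ℚ)) ^ 2 = (((x + y + z) * (-x + y + z) * (x - y + z) * (x + y - z) : ℤ) : ℚ) := by
        rw [← heron, ← hN]; ring
      exact_mod_cast this
    have hz' : z = 2 * s + 1 - x - y := by linarith
    obtain ⟨k, hk⟩ : ∃ k, x ^ 2 + y ^ 2 - z ^ 2 = 2 * k + 1 := by
      refine ⟨-(2 * s ^ 2 + 2 * s - (2 * s + 1) * (x + y) + x * y) - 1, ?_⟩
      subst hz'
      ring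
    have h3 : N ^ 2 = 4 * (x ^ 2 * y ^ 2 - k ^ 2 - k - 1) + 3 := by
      linear_combination hN2 - (x ^ 2 + y ^ 2 - z ^ 2 + 2 * k + 1) * hk
    rcases Int.even_or_odd' N with ⟨c, hc | hc⟩
    · have : N ^ 2 = 4 * c ^ 2 := by rw [hc]; ring
      omega
    · have : N ^ 2 = 4 * (c ^ 2 + c) + 1 := by rw [hc]; ring
      omega
end
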